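/- Let (R, m) be an analytically unramified Noetherian local ring with conductor ideal 𝔠. If 𝔠 has finite injective dimension as an R-module, then R is normal; in particular, R is a Gorenstein ring. -/

import Mathlib

open CategoryTheory IsLocalRing

set_option synthInstance.maxHeartbeats 1000000
set_option maxHeartbeats 1000000

noncomputable section

/-- The integral closure `R̄` of `R` in its total ring of fractions, viewed as a type
(with its canonical `R`-algebra and `R`-module structures). -/
abbrev IntClosure (R : Type) [CommRing R] : Type :=
  ↥(integralClosure R (FractionRing R))

/-- The quotient `R`-module `R̄/R`. -/
abbrev IntClosureQuot (R : Type) [CommRing R] : Type :=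
  IntClosure R ⧸ LinearMap.range (Algebra.linearMap R (IntClosure R))

/-- The conductor ideal `𝔠 = Ann_R(R̄/R) = {r : R | r • R̄ ⊆ R}`. -/
def conductorIdeal (R : Type) [CommRing R] : Ideal R :=
  Module.annihilator R (IntClosureQuot R)

/-- A local ring `R` is analytically unramified if its `m`-adic completion is reduced. -/
def AnalyticallyUnramified (R : Type) [CommRing R] [IsLocalRing R] : Prop :=
  IsReduced (AdicCompletion (maximalIdeal R) R)

/-- `R` is normal: it is reduced and equal to its integral closure `R̄` in its total
ring of fractions. -/
def IsNormalRing (R : Type) [CommRing R] : Prop :=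
  IsReduced R ∧ integralClosure R (FractionRing R) = ⊥

/-- `Ext^i_R(M, N)` as a type. -/
abbrev ExtMod (R : Type) [CommRing R] (M : Type) [AddCommGroup M] [Module R M]
    (N : Type) [AddCommGroup N] [Module R N] (i : ℕ) : Type :=
  ↥(((Ext R (ModuleCat.{0} R) i).obj (Opposite.op (ModuleCat.of R M))).obj (ModuleCat.of R N))

/-- `M` has finite projective dimension over `R`:
`Ext^i_R(M, -)` vanishes for all `i` bigger than some `n`. -/
def HasFiniteProjDim (R : Type) [CommRing R] (M : Type) [AddCommGroup M] [Module R M] : Prop :=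
  ∃ n : ℕ, ∀ (N : ModuleCat.{0} R) (i : ℕ), n < i →
    Subsingleton ↥(((Ext R (ModuleCat.{0} R) i).obj (Opposite.op (ModuleCat.of R M))).obj N)

/-- `M` has finite injective dimension over `R`:
`Ext^i_R(-, M)` vanishes for all `i` bigger than some `n`. -/
def HasFiniteInjDim (R : Type) [CommRing R] (M : Type) [AddCommGroup M] [Module R M] : Prop :=
  ∃ n : ℕ, ∀ (N : ModuleCat.{0} R) (i : ℕ), n < i →
    Subsingleton ↥(((Ext R (ModuleCat.{0} R) i).obj (Opposite.op N)).obj (ModuleCat.of R M))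

/-- The depth of an `R`-module `M` over a local ring `(R, m)`: the least `i` such that
`Ext^i_R(R/m, M) ≠ 0` (`⊤` if there is no such `i`), valued in `WithBot (WithTop ℕ)`
for easy comparison with `ringKrullDim`. -/
def moduleDepth (R : Type) [CommRing R] [IsLocalRing R]
    (M : Type) [AddCommGroup M] [Module R M] : WithBot (WithTop ℕ) :=
  sInf { n : WithBot (WithTop ℕ) |
    ∃ i : ℕ, n = (i : ℕ) ∧ Nontrivial (ExtMod R (ResidueField R) M i) }

/-- A Noetherian local ring is Gorenstein if it has finite injective dimension
as a module over itself. -/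
def IsGorensteinLocal (R : Type) [CommRing R] [IsLocalRing R] : Prop :=
  IsNoetherianRing R ∧ HasFiniteInjDim R R

/-- A Noetherian local ring is Cohen–Macaulay if its depth equals its Krull dimension. -/
def IsCohenMacaulayLocal (R : Type) [CommRing R] [IsLocalRing R] : Prop :=
  IsNoetherianRing R ∧ moduleDepth R R = ringKrullDim R

/-- A ring is Cohen–Macaulay if it is Noetherian and all its localizations at primes
are Cohen–Macaulay local rings. -/
def IsCohenMacaulayRing (A : Type) [CommRing A] : Prop :=
  IsNoetherianRing A ∧ ∀ (p : Ideal A) [p.IsPrime],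
    moduleDepth (Localization.AtPrime p) (Localization.AtPrime p) =
      ringKrullDim (Localization.AtPrime p)

/-- Serre's condition `(S2)`: `depth (R_p) ≥ min {2, height p}` for every prime `p`
(`height p` being the dimension of `R_p`). -/
def SerreS2 (R : Type) [CommRing R] : Prop :=
  ∀ (p : Ideal R) [p.IsPrime],
    min 2 (ringKrullDim (Localization.AtPrime p)) ≤
      moduleDepth (Localization.AtPrime p) (Localization.AtPrime p)

/-- A Noetherian local ring is regular if its maximal ideal can be generated by
`dim R` elements. -/
def IsRegularLocal (A : Type) [CommRing A] [IsLocalRing A] : Prop :=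
  IsNoetherianRing A ∧ ∃ s : Finset A, Ideal.span (s : Set A) = maximalIdeal A ∧
    (s.card : WithBot (WithTop ℕ)) = ringKrullDim A

/-- Serre's condition `(R1)`: `R_p` is regular for every prime `p` of height at most `1`. -/
def SerreR1 (R : Type) [CommRing R] : Prop :=
  ∀ (p : Ideal R) [p.IsPrime], ringKrullDim (Localization.AtPrime p) ≤ 1 →
    IsRegularLocal (Localization.AtPrime p)

/-- The `i`-th local cohomology `H^i_m(M)` of `M` with support in the maximal ideal,
as a type. -/
abbrev localCohMod (R : Type) [CommRing R] [IsLocalRing R] (i : ℕ)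
    (M : Type) [AddCommGroup M] [Module R M] : Type :=
  ↥((localCohomology (maximalIdeal R) i).obj (ModuleCat.of R M))

/-- `x : Fin d → R` is a system of parameters for the local ring `(R, m)`:
`d = dim R`, all `x i` lie in `m`, and the ideal they generate is `m`-primary
(its radical is `m`). -/
def IsSystemOfParameters (R : Type) [CommRing R] [IsLocalRing R] {d : ℕ}
    (x : Fin d → R) : Prop :=
  (d : WithBot (WithTop ℕ)) = ringKrullDim R ∧ (∀ i, x i ∈ maximalIdeal R) ∧
    (Ideal.span (Set.range x)).radical = maximalIdeal R

/-- `E` is an injective hull of the residue field of the local ring `R`: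
`E` is injective and contains a copy of `R/m` as an essential submodule. -/
def IsInjectiveHullOfResidueField (R : Type) [CommRing R] [IsLocalRing R]
    (E : Type) [AddCommGroup E] [Module R E] : Prop :=
  Module.Injective R E ∧ ∃ f : ResidueField R →ₗ[R] E, Function.Injective f ∧
    ∀ N : Submodule R E, N ≠ ⊥ → N ⊓ LinearMap.range f ≠ ⊥

/-!
Suppose `R̄ ≠ R`. Since `R̄` is a finite `R`-module, `𝔠` contains a nonzerodivisor `x` and `R̄ / R`
has an associated prime `p = (R : u)`, `u ∈ R̄`; put `a = x u ∈ R`, so that `p = (x : a)`. After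
localizing at `p`, multiplication by `a` factors as `R / x → k → R / x` through the residue field
`k`. As `𝔠` is an ideal of `R̄`, multiplication by `u` is an endomorphism `U` of `𝔠` with
`a = x U`, so `a` acts as zero on `Ext¹(R / x, 𝔠)`. With `pd (R / x) = 1`, descending induction
from the injective dimension of `𝔠` gives `Extⁿ(k, 𝔠) = 0` for all `n ≥ 1`. Hence
`Ext¹(R / x, 𝔠) = 𝔠 / x 𝔠` vanishes, and `𝔠_p = 0` by Nakayama, contradicting `x ∈ 𝔠`. So
`R̄ = R`, `𝔠 = R`, and `R` itself has finite injective dimension.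

Finiteness of `R̄` descends from that of the normalizations of `R̂ / 𝔭`, `𝔭` a minimal prime of the
reduced ring `R̂`. For these, let `B` be a domain finite over a complete local ring, with fraction
field `K` and integral closure `S`. For a height-one prime `q` of `S` over `P ⊂ B`, the principal
parts `K / S_q` are a quotient of `Γ_P(K / B_P)`, and `ℓ(Q[x]) ≤ ℓ(F[x])` for a quotient `Q` of a
`P`-power torsion module `F`. This bounds `ℓ(S_q / x S_q)`, so `S_q` is a discrete valuation ring
with residue field finite over that of `P`, and only finitely many `q` contain a given `x ≠ 0`;
moreover `S = ⋂ S_q`. By Noetherian induction `S / q` is finite over `B`; filtering `S / x S` by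
symbolic powers of the `q ∋ x` shows that it is finite, and completeness lifts this to `S`.
-/

section PowerTorsion

/-- `M` is `I`-power torsion: `M = Γ_I(M)`, that is, every element of `M` is killed by a power
of `I`. -/
def IsPowerTorsion {C : Type*} [CommRing C] (I : Ideal C) (M : Type*) [AddCommGroup M]
    [Module C M] : Prop :=
  ∀ v : M, ∃ n : ℕ, ∀ c ∈ I ^ n, c • v = 0

variable {C : Type*} [CommRing C] {I : Ideal C} {M N : Type*} [AddCommGroup M] [Module C M]
  [AddCommGroup N] [Module C N]

lemma IsPowerTorsion.of_injective (h : IsPowerTorsion I N) {f : M →ₗ[C] N}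
    (hf : Function.Injective f) : IsPowerTorsion I M := fun v ↦ by
  obtain ⟨n, hn⟩ := h (f v)
  exact ⟨n, fun c hc ↦ hf (by rw [map_smul, hn c hc, map_zero])⟩

lemma IsPowerTorsion.of_surjective (h : IsPowerTorsion I M) {f : M →ₗ[C] N}
    (hf : Function.Surjective f) : IsPowerTorsion I N := fun v ↦ by
  obtain ⟨u, rfl⟩ := hf v
  obtain ⟨n, hn⟩ := h u
  exact ⟨n, fun c hc ↦ by rw [← map_smul, hn c hc, map_zero]⟩

lemma isPowerTorsion_primaryComponent : IsPowerTorsion I (Ideal.primaryComponent M I) := by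
  rintro ⟨v, hv⟩
  obtain ⟨n, hn⟩ := (Ideal.primaryComponent_mem M I v).1 hv
  exact ⟨n, fun c hc ↦ Subtype.ext ((Submodule.mem_torsionBySet_iff _ _).1 hn ⟨c, hc⟩)⟩

end PowerTorsion

section Length

variable {C : Type*} [CommRing C] {M N : Type*} [AddCommGroup M] [Module C M]
  [AddCommGroup N] [Module C N]

lemma length_le_of_forall_fg_le {h : ℕ}
    (hG : ∀ G : Submodule C M, G.FG → Module.length C G ≤ h) : Module.length C M ≤ h := by
  obtain ⟨G, hfg, hmax⟩ : ∃ G : Submodule C M, G.FG ∧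
      ∀ G' : Submodule C M, G'.FG → Module.length C G' ≤ Module.length C G := by
    obtain ⟨_, ⟨⟨G, hfg⟩, rfl⟩, hmax⟩ := Set.Finite.exists_maximal
      (s := Set.range fun G : {G : Submodule C M // G.FG} ↦ Module.length C G)
      (((Set.finite_Iic h).image Nat.cast).subset (Set.range_subset_iff.2 fun G ↦ by
        obtain ⟨n, hn, hnh⟩ := ENat.le_natCast_iff.1 (hG G G.2)
        exact ⟨n, hnh, hn.symm⟩))
      ⟨_, ⟨⊥, Submodule.fg_bot⟩, rfl⟩
    exact ⟨G, hfg, fun G' hG' ↦ not_lt.1 fun hlt ↦ hlt.not_ge (hmax ⟨⟨G', hG'⟩, rfl⟩ hlt.le)⟩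
  suffices G = ⊤ from Module.length_top (R := C) (M := M) ▸ this ▸ hG G hfg
  refine eq_top_iff.2 fun v _ ↦ ?_
  have hfin := hmax _ (hfg.sup (Submodule.fg_span_singleton v))
  rw [Module.length_submodule, Module.length_submodule] at hfin
  have hheight : Order.height G < ⊤ :=
    Module.length_submodule (N := G) ▸ (hG G hfg).trans_lt (ENat.natCast_lt_top h)
  by_contra hv
  have hlt : G < G ⊔ Submodule.span C {v} :=
    lt_of_le_of_ne le_sup_left fun he ↦
      hv (he ▸ Submodule.mem_sup_right (Submodule.mem_span_singleton_self v))
  exact hfin.not_gt (Order.height_strictMono hlt hheight)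

lemma length_torsionBy_eq_length_quotient (hM : IsFiniteLength C M) (x : C) :
    Module.length C (Submodule.torsionBy C M x) =
      Module.length C (M ⧸ LinearMap.range (LinearMap.lsmul C M x)) := by
  set f := LinearMap.lsmul C M x
  have hker := Module.length_eq_add_of_exact (LinearMap.ker f).subtype f.rangeRestrict
    (Submodule.subtype_injective _) f.surjective_rangeRestrict
    (by rw [LinearMap.exact_iff, LinearMap.ker_rangeRestrict, Submodule.range_subtype])
  have hrange := Module.length_eq_add_of_exact (LinearMap.range f).subtype (LinearMap.range f).mkQ
    (Submodule.subtype_injective _) (Submodule.mkQ_surjective _) (LinearMap.exact_subtype_mkQ _)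
  have hfin : Module.length C (LinearMap.range f) ≠ ⊤ :=
    Module.length_ne_top_iff.2 (hM.of_injective (Submodule.subtype_injective _))
  rw [hker, add_comm] at hrange
  exact ENat.add_right_injective_of_ne_top hfin hrange

lemma length_torsionBy_le_of_injective {f : M →ₗ[C] N} (hf : Function.Injective f) (x : C) :
    Module.length C (Submodule.torsionBy C M x) ≤ Module.length C (Submodule.torsionBy C N x) := by
  refine Module.length_le_of_injective (f.restrict fun v hv ↦ ?_)
    fun u v huv ↦ Subtype.ext (hf (congrArg Subtype.val huv))
  rw [Submodule.mem_torsionBy_iff] at hv ⊢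
  rw [← map_smul, hv, map_zero]

lemma length_torsionBy_le_of_surjective_of_isFiniteLength (hM : IsFiniteLength C M)
    {f : M →ₗ[C] N} (hf : Function.Surjective f) (x : C) :
    Module.length C (Submodule.torsionBy C N x) ≤ Module.length C (Submodule.torsionBy C M x) := by
  rw [length_torsionBy_eq_length_quotient hM, length_torsionBy_eq_length_quotient
    (hM.of_surjective hf)]
  refine Module.length_le_of_surjective (Submodule.mapQ _ _ f ?_) ?_
  · rintro _ ⟨v, rfl⟩
    exact ⟨f v, (map_smul f x v).symm⟩
  · exact fun v ↦ by
      obtain ⟨v, rfl⟩ := Submodule.mkQ_surjective _ v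
      obtain ⟨u, rfl⟩ := hf v
      exact ⟨Submodule.Quotient.mk u, rfl⟩

lemma exists_fg_map_eq_of_surjective {f : M →ₗ[C] N} (hf : Function.Surjective f)
    {G : Submodule C N} (hG : G.FG) : ∃ F : Submodule C M, F.FG ∧ F.map f = G := by
  obtain ⟨s, hs, rfl⟩ := Submodule.fg_def.1 hG
  refine ⟨Submodule.span C (Function.surjInv hf '' s), Submodule.fg_span (hs.image _), ?_⟩
  simp only [Submodule.map_span, Set.image_image, Function.surjInv_eq, Set.image_id']

lemma fg_torsionBy_quotient [IsNoetherianRing C] {K : Type*} [Field K] [Algebra C K]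
    [FaithfulSMul C K] {L : Submodule C K} (hL : L.FG) {x : C} (hx : x ≠ 0) :
    (Submodule.torsionBy C (K ⧸ L) x).FG := by
  have hxK : algebraMap C K x ≠ 0 := (FaithfulSMul.algebraMap_eq_zero_iff C K).not.2 hx
  refine ((hL.map (LinearMap.mulLeft C (algebraMap C K x)⁻¹)).map L.mkQ).of_le fun v hv ↦ ?_
  obtain ⟨u, rfl⟩ := L.mkQ_surjective v
  rw [Submodule.mem_torsionBy_iff, ← map_smul, Submodule.mkQ_apply,
    Submodule.Quotient.mk_eq_zero] at hv
  refine Submodule.mem_map_of_mem ⟨x • u, hv, ?_⟩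
  rw [LinearMap.mulLeft_apply, Algebra.smul_def, inv_mul_cancel_left₀ hxK]

variable [IsLocalRing C] [IsNoetherianRing C]

lemma IsPowerTorsion.isFiniteLength [hfin : Module.Finite C M]
    (hM : IsPowerTorsion (maximalIdeal C) M) : IsFiniteLength C M := by
  induction hfin using IsNoetherianRing.induction_on_isQuotientEquivQuotientPrime C with
  | subsingleton M => exact .of_subsingleton
  | quotient M p e =>
    obtain ⟨n, hn⟩ := hM (e.symm 1)
    have hle : maximalIdeal C ≤ p.asIdeal := by
      refine Ideal.IsPrime.le_of_pow_le (n := n) fun c hc ↦ ?_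
      have : e (c • e.symm 1) = 0 := by rw [hn c hc, map_zero]
      rw [map_smul, e.apply_symm_apply, Algebra.smul_def, mul_one] at this
      exact Ideal.Quotient.eq_zero_iff_mem.1 this
    have : p.asIdeal.IsMaximal :=
      (maximalIdeal.isMaximal C).eq_of_le p.2.ne_top hle ▸ maximalIdeal.isMaximal C
    have : IsSimpleModule C (C ⧸ p.asIdeal) :=
      isSimpleModule_iff_isCoatom.2 (Ideal.isMaximal_def.1 this)
    exact e.symm.isFiniteLength (Module.length_ne_top_iff.1 (by simp [Module.length_eq_one]))
  | exact M₁ M₂ M₃ f g hf hg hfg h₁ h₃ =>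
    rw [← Module.length_ne_top_iff, Module.length_eq_add_of_exact f g hf hg hfg]
    exact WithTop.add_ne_top.2 ⟨Module.length_ne_top_iff.2 (h₁ (hM.of_injective hf)),
      Module.length_ne_top_iff.2 (h₃ (hM.of_surjective hg))⟩

/- On finite length modules `ℓ(Q[x]) = ℓ(Q/xQ)`, which is monotone under quotients; every finitely
generated submodule of `N[x]` lies in the image of a finite length submodule of `M`. -/
theorem IsPowerTorsion.length_torsionBy_le_of_surjective (hM : IsPowerTorsion (maximalIdeal C) M)
    {f : M →ₗ[C] N} (hf : Function.Surjective f) {x : C}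
    (hfin : Module.length C (Submodule.torsionBy C M x) ≠ ⊤) :
    Module.length C (Submodule.torsionBy C N x) ≤ Module.length C (Submodule.torsionBy C M x) := by
  obtain ⟨h, hh⟩ := ENat.ne_top_iff_exists.1 hfin
  rw [← hh]
  refine length_le_of_forall_fg_le fun G hG ↦ ?_
  obtain ⟨F, hF, hFG⟩ : ∃ F : Submodule C M, F.FG ∧ F.map f = G.map (Submodule.subtype _) :=
    exists_fg_map_eq_of_surjective hf (hG.map _)
  have : Module.Finite C F := Module.Finite.iff_fg.2 hF
  have hG_mem (v : G) : (v : N) ∈ F.map f := hFG ▸ Submodule.mem_map_of_mem v.2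
  calc Module.length C G
      ≤ Module.length C (Submodule.torsionBy C (F.map f) x) := by
        refine Module.length_le_of_injective
          (LinearMap.codRestrict _ (LinearMap.codRestrict _
            ((Submodule.subtype _).comp G.subtype) hG_mem) fun v ↦ Subtype.ext v.1.2)
          fun u v huv ↦ Subtype.ext (Subtype.ext ?_)
        exact congrArg (fun w ↦ (w.1.1 : N)) huv
    _ ≤ Module.length C (Submodule.torsionBy C F x) :=
        length_torsionBy_le_of_surjective_of_isFiniteLength
          (hM.of_injective F.subtype_injective).isFiniteLength (f.submoduleMap_surjective F) x
    _ ≤ h := hh ▸ length_torsionBy_le_of_injective F.subtype_injective x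

theorem length_torsionBy_primaryComponent_ne_top {K : Type*} [Field K] [Algebra C K]
    [FaithfulSMul C K] {L : Submodule C K} (hL : L.FG) {x : C} (hx : x ≠ 0) :
    Module.length C (Submodule.torsionBy C
      (Ideal.primaryComponent (K ⧸ L) (maximalIdeal C)) x) ≠ ⊤ := by
  have : Module.Finite C (Submodule.torsionBy C (K ⧸ L) x) :=
    Module.Finite.iff_fg.2 (fg_torsionBy_quotient hL hx)
  refine Module.length_ne_top_iff.2 ?_
  have : Module.Finite C (Submodule.torsionBy C
      (Ideal.primaryComponent (K ⧸ L) (maximalIdeal C)) x) :=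
    Module.Finite.of_injective ((Submodule.subtype _).restrict (p := Submodule.torsionBy C _ x)
      (q := Submodule.torsionBy C (K ⧸ L) x) fun v hv ↦ congrArg Subtype.val hv)
      fun u v huv ↦ Subtype.ext (Subtype.ext (congrArg (fun w ↦ w.1) huv))
  exact (isPowerTorsion_primaryComponent.of_injective
    (Submodule.subtype_injective _)).isFiniteLength

end Length

section HeightOne

variable {S : Type*} [CommRing S] {q : Ideal S} [q.IsPrime]

lemma exists_notMem_forall_mul_mem_of_map_le {I J : Ideal S} (hJ : J.FG)
    (h : J.map (algebraMap S (Localization.AtPrime q)) ≤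
      I.map (algebraMap S (Localization.AtPrime q))) : ∃ s ∉ q, ∀ z ∈ J, s * z ∈ I := by
  obtain ⟨F, rfl⟩ := hJ
  have (f : F) : ∃ s ∉ q, s * f ∈ I := by
    obtain ⟨s, hs, hsf⟩ := (IsLocalization.algebraMap_mem_map_algebraMap_iff q.primeCompl _ _ _).1
      (h (Ideal.mem_map_of_mem _ (Ideal.subset_span f.2)))
    exact ⟨s, hs, hsf⟩
  choose s hs hsI using this
  refine ⟨∏ f, s f, fun hmem ↦ ?_, fun z hz ↦ ?_⟩
  · obtain ⟨f, -, hf⟩ := (Ideal.IsPrime.prod_mem_iff).1 hmem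
    exact hs f hf
  · refine Submodule.span_induction (fun f hf ↦ ?_) (by simp) (fun a b _ _ ha hb ↦ ?_)
      (fun c a _ ha ↦ ?_) hz
    · exact I.mem_of_dvd (mul_dvd_mul_right (Finset.dvd_prod_of_mem s (Finset.mem_univ ⟨f, hf⟩)) f)
        (hsI ⟨f, hf⟩)
    · exact mul_add (∏ f, s f) a b ▸ I.add_mem ha hb
    · rw [smul_eq_mul, mul_left_comm]
      exact I.mul_mem_left c ha

lemma exists_notMem_forall_mul_mem_of_mem_minimalPrimes {I J : Ideal S} (hJ : J.FG) (hJq : J ≤ q)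
    (hq : q ∈ I.minimalPrimes) : ∃ s ∉ q, ∃ n : ℕ, ∀ z ∈ J ^ n, s * z ∈ I := by
  have hrad := IsLocalization.AtPrime.radical_map_of_mem_minimalPrimes
    (A := Localization.AtPrime q) q I hq
  obtain ⟨n, hn⟩ := Ideal.exists_pow_le_of_le_radical_of_fg
    ((Ideal.map_mono hJq).trans_eq hrad.symm) (hJ.map (algebraMap S (Localization.AtPrime q)))
  rw [← Ideal.map_pow] at hn
  obtain ⟨s, hs, hsI⟩ := exists_notMem_forall_mul_mem_of_map_le hJ.pow hn
  exact ⟨s, hs, n, hsI⟩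

variable [IsDomain S]

lemma eq_of_le_of_height_le_one {Q : Ideal S} [Q.IsPrime] (hq : q.height ≤ 1) (hQ : Q ≠ ⊥)
    (hle : Q ≤ q) : Q = q := by
  have : q.FiniteHeight := Ideal.finiteHeight_iff_lt.2 (.inr (hq.trans_lt (by simp)))
  have : Q.FiniteHeight := Ideal.finiteHeight_of_le hle Ideal.IsPrime.ne_top'
  have hQpos : 1 ≤ Q.height :=
    Order.one_le_iff_pos.2 (pos_iff_ne_zero.2 (Ideal.height_eq_zero_iff_eq_bot.not.2 hQ))
  exact Ideal.eq_of_le_of_height_le Q hle (hq.trans hQpos)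

lemma exists_notMem_forall_dvd_mul_of_height_le_one (hq : q.height ≤ 1) {J : Ideal S}
    (hJ : J.FG) (hJq : J ≤ q) {d : S} (hd : d ≠ 0) :
    ∃ s ∉ q, ∃ n : ℕ, ∀ z ∈ J ^ n, d ∣ s * z := by
  by_cases hdq : d ∈ q
  · have hmin : q ∈ (Ideal.span {d}).minimalPrimes := by
      refine ⟨⟨‹_›, (Ideal.span_singleton_le_iff_mem _).2 hdq⟩, fun Q ⟨hQ, hdQ⟩ hle ↦ ?_⟩
      exact (eq_of_le_of_height_le_one hq (ne_bot_of_le_ne_bot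
        (Ideal.span_singleton_eq_bot.not.2 hd) hdQ) hle).ge
    simpa only [Ideal.mem_span_singleton] using
      exists_notMem_forall_mul_mem_of_mem_minimalPrimes hJ hJq hmin
  · exact ⟨d, hdq, 0, fun z _ ↦ dvd_mul_right d z⟩

end HeightOne

section FiniteSubalgebra

lemma exists_ne_zero_forall_mul_mem_range {B S : Type*} [CommRing B] [CommRing S] [Algebra B S]
    (K : Type*) [Field K] [Algebra B K] [IsFractionRing B K] [Algebra S K] [IsScalarTower B S K]
    (D : Subalgebra B S) [Module.Finite B D] :
    ∃ c : B, c ≠ 0 ∧ ∀ z ∈ D, ∃ b : B,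
      algebraMap B K c * algebraMap S K z = algebraMap B K b := by
  have hfrac : IsFractional (nonZeroDivisors B)
      (D.toSubmodule.map (IsScalarTower.toAlgHom B S K).toLinearMap) :=
    FractionalIdeal.isFractional_of_fg ((Module.Finite.iff_fg.1 ‹Module.Finite B D›).map _)
  obtain ⟨c, hc, hcD⟩ := hfrac
  have : IsDomain B := (IsFractionRing.injective B K).isDomain
  refine ⟨c, nonZeroDivisors.ne_zero hc, fun z hz ↦ ?_⟩
  obtain ⟨b, hb⟩ := hcD _ (Submodule.mem_map_of_mem hz)
  exact ⟨b, (Algebra.smul_def c _).symm.trans hb.symm⟩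

variable {B S : Type*} [CommRing B] [IsNoetherianRing B] [CommRing S] [Algebra B S]
  [Algebra.IsIntegral B S] {q : Ideal S} [q.IsPrime]

/- A prime of `D` containing `y` and contained in `q` contains `P = q ∩ B`, hence equals `q ∩ D`
by incomparability: `q ∩ D` is minimal over `y`, and Krull's principal ideal theorem applies. -/
lemma exists_finite_subalgebra_height_comap_le_one {y s : S} (hy : y ∈ q) (hs : s ∉ q) {n : ℕ}
    (h : ∀ p ∈ q.under B ^ n, y ∣ s * algebraMap B S p) (F : Set S) (hF : F.Finite) :
    ∃ D : Subalgebra B S, Module.Finite B D ∧ F ⊆ D ∧ (q.comap D.val).height ≤ 1 := by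
  obtain ⟨G, hG⟩ := (isNoetherianRing_iff_ideal_fg B).1 ‹_› (q.under B ^ n)
  choose! e he using h
  set D := Algebra.adjoin B (F ∪ {y, s} ∪ (e '' G))
  have hFD : F ∪ {y, s} ∪ (e '' G) ⊆ D := Algebra.subset_adjoin
  have hDfin : Module.Finite B D := Module.Finite.iff_fg.2 (fg_adjoin_of_finite
    ((hF.union (Set.toFinite _)).union (G.finite_toSet.image e)) fun x _ ↦
      Algebra.IsIntegral.isIntegral x)
  have : IsNoetherianRing D := IsNoetherianRing.of_finite B D
  have hyD : y ∈ D := hFD (by simp)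
  have hsD : s ∈ D := hFD (by simp)
  refine ⟨D, hDfin, fun x hx ↦ hFD (by simp [hx]), ?_⟩
  refine Ideal.height_le_one_of_isPrincipal_of_mem_minimalPrimes (Ideal.span {⟨y, hyD⟩}) _
    ⟨⟨inferInstance, (Ideal.span_singleton_le_iff_mem _).2 hy⟩, fun Q ⟨_, hyQ⟩ hQq ↦ ?_⟩
  have hpow : q.under B ^ n ≤ Q.under B := by
    rw [← hG, Ideal.span_le]
    intro g hg
    have heg := he g (hG ▸ Ideal.subset_span hg)
    have hmem : (⟨s, hsD⟩ : D) * algebraMap B D g ∈ Q := by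
      rw [show ⟨s, hsD⟩ * algebraMap B D g = ⟨y, hyD⟩ * ⟨e g, hFD (.inr ⟨g, hg, rfl⟩)⟩ from
        Subtype.ext heg]
      exact Q.mul_mem_right _ ((Ideal.span_singleton_le_iff_mem _).1 hyQ)
    exact (Ideal.IsPrime.mem_or_mem ‹_› hmem).resolve_left fun hsQ ↦ hs (hQq hsQ)
  by_contra hne
  exact (Ideal.IsIntegral.comap_lt_comap (R := B) (lt_of_le_not_ge hQq hne)).not_ge
    (Ideal.IsPrime.le_of_pow_le hpow)

variable [IsDomain S]

lemma height_le_one_of_forall_dvd {y s : S} (hy : y ∈ q) (hs : s ∉ q) {n : ℕ}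
    (h : ∀ p ∈ q.under B ^ n, y ∣ s * algebraMap B S p) : q.height ≤ 1 := by
  refine Ideal.height_le_iff.2 fun Q _ hQq ↦ ?_
  suffices Q = ⊥ by rw [this, Ideal.height_bot]; simp
  by_contra hQ
  obtain ⟨x, hxQ, hx⟩ := Q.ne_bot_iff.1 hQ
  obtain ⟨D, _, hxD, hD⟩ := exists_finite_subalgebra_height_comap_le_one hy hs h {x}
    (Set.finite_singleton x)
  have hQD : Q.comap D.val ≠ ⊥ := (Submodule.ne_bot_iff _).2
    ⟨⟨x, hxD rfl⟩, hxQ, fun h0 ↦ hx (congrArg Subtype.val h0)⟩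
  have hcomap := eq_of_le_of_height_le_one hD hQD (Ideal.comap_mono hQq.le)
  refine (Ideal.IsIntegral.comap_lt_comap (R := B) hQq).ne ?_
  ext b
  exact SetLike.ext_iff.1 hcomap (algebraMap B D b)

variable {K : Type*} [Field K] [Algebra B K] [IsFractionRing B K] [Algebra S K]
  [IsScalarTower B S K]

variable (K) in
/- The power of `q ∩ D` absorbs both `d` and the conductor of `B ⊆ D`, which is why `D` must be
fixed before `d`. -/
theorem exists_finite_subalgebra_forall_mul_mem (hq : q.height = 1) {F : Set S} (hF : F.Finite) :
    ∃ D : Subalgebra B S, Module.Finite B D ∧ F ⊆ D ∧ ∀ d : B, d ≠ 0 →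
      ∃ s ∈ D, s ∉ q ∧ ∃ n : ℕ, ∀ e ∈ (q.comap D.val) ^ n,
        ∃ b : B, algebraMap S K (s * e) = algebraMap B K (d * b) := by
  have hBK := IsFractionRing.injective B K
  have hinj : Function.Injective (algebraMap B S) := .of_comp (f := algebraMap S K) <| by
    rwa [← RingHom.coe_comp, ← IsScalarTower.algebraMap_eq]
  have : IsDomain B := hBK.isDomain
  obtain ⟨x, hxq, hx⟩ := (Submodule.ne_bot_iff _).1 (Ideal.IsIntegral.comap_ne_bot B
    (fun h ↦ by simp [h] at hq : q ≠ ⊥))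
  have hJ : ((q.under B).map (algebraMap B S)).FG :=
    Ideal.FG.map (IsNoetherian.noetherian (q.under B)) _
  obtain ⟨s, hs, n, hsn⟩ := exists_notMem_forall_dvd_mul_of_height_le_one hq.le hJ
    Ideal.map_comap_le ((map_ne_zero_iff _ hinj).2 hx)
  obtain ⟨D, hDfin, hFD, hD⟩ := exists_finite_subalgebra_height_comap_le_one
    (y := algebraMap B S x) hxq hs
    (fun p hp ↦ hsn _ (by rw [← Ideal.map_pow]; exact Ideal.mem_map_of_mem _ hp)) F hF
  have : IsNoetherianRing D := IsNoetherianRing.of_finite B D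
  obtain ⟨c, hc, hcD⟩ := exists_ne_zero_forall_mul_mem_range K D
  refine ⟨D, hDfin, hFD, fun d hd ↦ ?_⟩
  have hdc : algebraMap B D (d * c) ≠ 0 := fun h ↦
    mul_ne_zero hd hc (hinj ((congrArg Subtype.val h).trans (map_zero _).symm))
  obtain ⟨t, ht, m, htm⟩ := exists_notMem_forall_dvd_mul_of_height_le_one hD
    (IsNoetherian.noetherian (q.comap D.val)) le_rfl hdc
  refine ⟨t, t.2, ht, m, fun e he ↦ ?_⟩
  obtain ⟨v, hv⟩ := htm e he
  obtain ⟨b, hb⟩ := hcD v v.2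
  have hte : (t : S) * e = algebraMap B S (d * c) * v := congrArg Subtype.val hv
  refine ⟨b, ?_⟩
  rw [hte, map_mul, ← IsScalarTower.algebraMap_apply, map_mul, map_mul, mul_assoc, hb]

lemma exists_sub_mul_mem_of_notMem {B D : Type*} [CommRing B] [CommRing D] [Algebra B D]
    [Algebra.IsIntegral B D] {q : Ideal D} [q.IsPrime] {s : D} (hs : s ∉ q) :
    ∃ t ∉ q.under B, ∃ u : D, algebraMap B D t - u * s ∈ q := by
  obtain ⟨t, ht, htq⟩ := SetLike.exists_of_lt <| Ideal.comap_lt_comap_of_integral_mem_sdiff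
    (R := B) (le_sup_right : q ≤ Ideal.span {s} ⊔ q)
    ⟨Ideal.mem_sup_left (Ideal.mem_span_singleton_self s), hs⟩ (Algebra.IsIntegral.isIntegral s)
  obtain ⟨u, e, he, hue⟩ := Ideal.mem_span_singleton_sup.1 ht
  exact ⟨t, htq, u, by rwa [← hue, add_sub_cancel_left]⟩

/- With `w = b / d`, `r (q ∩ D)ⁿ ⊆ dB` and `t - ur ∈ q ∩ D`, expand `(t - ur)ⁿ = tⁿ - s`. -/
theorem exists_mul_mem_range_of_height_eq_one (hq : q.height = 1) {F : Set S} (hF : F.Finite)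
    (hFq : F ⊆ q) (w : K) :
    ∃ (n : ℕ) (s r : S) (t : B), r ∉ q ∧ t ∉ q.under B ∧
      (∀ p ∈ q.under B ^ n, ∃ b : B,
        algebraMap B K p * (algebraMap S K s * w) = algebraMap B K b) ∧
      (∀ a ∈ F, ∃ b : B, algebraMap S K (a ^ n) * (algebraMap S K s * w) = algebraMap B K b) ∧
      ∃ b : B, algebraMap S K r * ((algebraMap B K t - algebraMap S K s) * w) =
        algebraMap B K b := by
  have : IsDomain B := (IsFractionRing.injective B K).isDomain
  obtain ⟨b, d, hd, rfl⟩ := IsFractionRing.div_surjective B w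
  have hdK : algebraMap B K d ≠ 0 := IsFractionRing.to_map_ne_zero_of_mem_nonZeroDivisors hd
  obtain ⟨D, _, hFD, hD⟩ := exists_finite_subalgebra_forall_mul_mem (B := B) K hq hF
  obtain ⟨r, hrD, hr, n, hrn⟩ := hD d (nonZeroDivisors.ne_zero hd)
  obtain ⟨t, ht, u, htu⟩ := exists_sub_mul_mem_of_notMem (B := B) (q := q.comap D.val)
    (s := ⟨r, hrD⟩) hr
  obtain ⟨v, hv⟩ : (⟨r, hrD⟩ : D) ∣ algebraMap B D t ^ n - (algebraMap B D t - u * ⟨r, hrD⟩) ^ n :=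
    .trans ⟨u, by ring⟩ (sub_dvd_pow_sub_pow _ _ n)
  have hmem {e : D} (he : e ∈ q.comap D.val ^ n) (v : D) : ∃ b' : B, algebraMap S K e *
      (algebraMap S K (r * v) * (algebraMap B K b / algebraMap B K d)) = algebraMap B K b' := by
    obtain ⟨b', hb'⟩ := hrn (e * v) (Ideal.mul_mem_right _ _ he)
    refine ⟨b' * b, ?_⟩
    simp only [map_mul, MulMemClass.coe_mul] at hb' ⊢
    linear_combination (algebraMap B K b / algebraMap B K d) * hb' +
      algebraMap B K b' * mul_div_cancel₀ (algebraMap B K b) hdK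
  refine ⟨n, r * v, r, t ^ n, hr, fun h ↦ ht (Ideal.IsPrime.mem_of_pow_mem inferInstance _ h),
    fun p hp ↦ ?_, fun a ha ↦ ?_, ?_⟩
  · have hpD : algebraMap B D p ∈ q.comap D.val ^ n :=
      Ideal.pow_right_mono Ideal.map_comap_le n (Ideal.map_pow (algebraMap B D) _ n ▸
        Ideal.mem_map_of_mem (algebraMap B D) hp)
    rw [IsScalarTower.algebraMap_apply B S K]
    exact hmem hpD v
  · exact hmem (Ideal.pow_mem_pow (show ⟨a, hFD ha⟩ ∈ q.comap D.val from hFq ha) n) v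
  · obtain ⟨b', hb'⟩ := hmem (Ideal.pow_mem_pow htu n) 1
    have htv : algebraMap B S (t ^ n) - r * v = ↑((algebraMap B D t - u * ⟨r, hrD⟩) ^ n) := by
      rw [map_pow, sub_eq_iff_eq_add', ← sub_eq_iff_eq_add]
      exact congrArg Subtype.val hv
    refine ⟨b', ?_⟩
    rw [IsScalarTower.algebraMap_apply B S K, ← map_sub, htv, mul_left_comm, ← hb']
    simp

end FiniteSubalgebra

lemma sum_length_torsionBy_le_length_torsionBy_pi {C ι : Type*} [CommRing C] [Fintype ι]
    (M : ι → Type*) [∀ i, AddCommGroup (M i)] [∀ i, Module C (M i)] (x : C) :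
    ∑ i, Module.length C (Submodule.torsionBy C (M i) x) ≤
      Module.length C (Submodule.torsionBy C (∀ i, M i) x) := by
  rw [← Module.length_pi_of_fintype]
  exact Module.length_le_of_injective
    (LinearMap.codRestrict _ (LinearMap.pi fun i ↦ (Submodule.subtype _).comp
      (LinearMap.proj i)) fun f ↦ funext fun i ↦ (f i).2)
    fun f g hfg ↦ funext fun i ↦ Subtype.ext (congrFun (congrArg Subtype.val hfg) i)

section LocalizationIn

lemma algebraMap_ne_zero_of_notMem {B K : Type*} [CommRing B] [Field K] [Algebra B K]
    [IsFractionRing B K] {P : Ideal B} {s : B} (hs : s ∉ P) : algebraMap B K s ≠ 0 :=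
  (map_ne_zero_iff _ (IsFractionRing.injective B K)).2 fun h ↦ hs (h ▸ P.zero_mem)

variable {B : Type*} [CommRing B] [IsDomain B] (K : Type*) [Field K] [Algebra B K]
  [IsFractionRing B K]

/-- The localization `B_P` of a domain at a prime, realised as a subring of the fraction field. -/
def localizationIn (P : Ideal B) [P.IsPrime] : Subalgebra B K :=
  Localization.subalgebra.ofField K P.primeCompl P.primeCompl_le_nonZeroDivisors

instance (P : Ideal B) [P.IsPrime] : IsLocalization.AtPrime (localizationIn K P) P :=
  Localization.subalgebra.isLocalization_ofField K _ _

instance (P : Ideal B) [P.IsPrime] : IsLocalRing (localizationIn K P) :=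
  IsLocalization.AtPrime.isLocalRing _ P

instance (P : Ideal B) [P.IsPrime] [IsNoetherianRing B] : IsNoetherianRing (localizationIn K P) :=
  IsLocalization.isNoetherianRing P.primeCompl _ inferInstance

variable {K} {P : Ideal B} [P.IsPrime]

lemma mem_localizationIn {z : K} : z ∈ localizationIn K P ↔
    ∃ s ∉ P, ∃ a, algebraMap B K s * z = algebraMap B K a := by
  constructor
  · rintro ⟨a, s, hs, rfl⟩
    exact ⟨s, hs, a, by rw [mul_left_comm, mul_inv_cancel₀ (algebraMap_ne_zero_of_notMem hs),
      mul_one]⟩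
  · rintro ⟨s, hs, a, h⟩
    exact ⟨a, s, hs, by rw [← h, mul_comm, inv_mul_cancel_left₀ (algebraMap_ne_zero_of_notMem hs)]⟩

lemma inv_mem_localizationIn {s : B} (hs : s ∉ P) : (algebraMap B K s)⁻¹ ∈ localizationIn K P :=
  mem_localizationIn.2 ⟨s, hs, 1, by
    rw [mul_inv_cancel₀ (algebraMap_ne_zero_of_notMem hs), map_one]⟩

lemma mem_localizationIn_of_mul {s : B} (hs : s ∉ P) {z : K}
    (h : algebraMap B K s * z ∈ localizationIn K P) : z ∈ localizationIn K P := by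
  have := mul_mem (inv_mem_localizationIn (K := K) hs) h
  rwa [inv_mul_cancel_left₀ (algebraMap_ne_zero_of_notMem hs)] at this

lemma inv_notMem_localizationIn {x : B} (hx : x ∈ P) (hx0 : x ≠ 0) :
    (algebraMap B K x)⁻¹ ∉ localizationIn K P := fun h ↦ by
  obtain ⟨s, hs, a, hsa⟩ := mem_localizationIn.1 h
  rw [mul_inv_eq_iff_eq_mul₀ ((map_ne_zero_iff _ (IsFractionRing.injective B K)).2 hx0),
    ← map_mul] at hsa
  exact hs (IsFractionRing.injective B K hsa ▸ P.mul_mem_left a hx)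

end LocalizationIn

section Over

variable {B S : Type*} [CommRing B] [IsDomain B] [CommRing S] [IsDomain S] [Algebra B S]
  {K : Type*} [Field K] [Algebra B K] [IsFractionRing B K] [Algebra S K] [IsScalarTower B S K]
  [IsFractionRing S K]

lemma mem_localizationIn_of_liesOver {P : Ideal B} [P.IsPrime] {q : Ideal S} [q.IsPrime]
    [q.LiesOver P] {z : K} (hz : z ∈ localizationIn K P) : z ∈ localizationIn K q := by
  obtain ⟨s, hs, a, h⟩ := mem_localizationIn.1 hz
  refine mem_localizationIn.2 ⟨algebraMap B S s, (q.mem_of_liesOver P s).not.1 hs,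
    algebraMap B S a, ?_⟩
  rwa [← IsScalarTower.algebraMap_apply, ← IsScalarTower.algebraMap_apply]

variable (K) in
/-- `S_q` as a module over `B_P`, where `P` is the contraction of `q`. -/
def localizationOver (P : Ideal B) [P.IsPrime] (q : Ideal S) [q.IsPrime] [q.LiesOver P] :
    Subalgebra (localizationIn K P) K where
  __ := (localizationIn K q).toSubsemiring
  algebraMap_mem' c := mem_localizationIn_of_liesOver c.2

variable (P : Ideal B) [P.IsPrime]

variable (K) in
/-- The `P`-power torsion `Γ_P(K / B_P)` of the `B_P`-module `K / B_P`. -/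
abbrev torsionPrincipalParts : Submodule (localizationIn K P)
    (K ⧸ (1 : Submodule (localizationIn K P) K)) :=
  Ideal.primaryComponent _ (maximalIdeal (localizationIn K P))

variable (K) in
/-- The `B_P`-module `K / S_q` of principal parts at `q`, where `P` is the contraction of `q`. -/
abbrev PrincipalParts (q : Ideal S) [q.IsPrime] [q.LiesOver P] : Type _ :=
  K ⧸ (localizationOver K P q).toSubmodule

lemma mk_mem_torsionPrincipalParts_of_forall_mul_mem {n : ℕ} {v : K}
    (hv : ∀ p ∈ P ^ n, algebraMap B K p * v ∈ localizationIn K P) :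
    Submodule.Quotient.mk v ∈ torsionPrincipalParts K P := by
  refine (Ideal.primaryComponent_mem _ _ _).2 ⟨n, (Submodule.mem_torsionBySet_iff _ _).2 ?_⟩
  rintro ⟨c, hc⟩
  rw [SetLike.mem_coe, ← IsLocalization.AtPrime.map_eq_maximalIdeal P, ← Ideal.map_pow] at hc
  have hle : (P ^ n).map (algebraMap B (localizationIn K P)) ≤
      (1 : Submodule (localizationIn K P) K).comap (LinearMap.toSpanSingleton _ K v) :=
    Ideal.map_le_iff_le_comap.2 fun p hp ↦ Submodule.mem_one.2 ⟨⟨_, hv p hp⟩, rfl⟩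
  exact (Submodule.Quotient.mk_eq_zero _).2 (hle hc)

variable [Algebra.IsIntegral B S] [IsNoetherianRing B]

lemma exists_mem_torsionPrincipalParts_sub_mem {ι : Type*} [Finite ι] (q : ι → Ideal S)
    [∀ i, (q i).IsPrime] [∀ i, (q i).LiesOver P] (hq : ∀ i, (q i).height = 1)
    (hinj : Function.Injective q) (i : ι) (w : K) :
    ∃ v : K, Submodule.Quotient.mk v ∈ torsionPrincipalParts K P ∧
      w - v ∈ localizationIn K (q i) ∧ ∀ j ≠ i, v ∈ localizationIn K (q j) := by
  have hsep (j : {j // j ≠ i}) : ∃ a ∈ q i, a ∉ q j := SetLike.not_le_iff_exists.1 fun hle ↦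
    j.2 (hinj (eq_of_le_of_height_le_one (hq j).le (fun h ↦ by simpa [h] using hq i) hle)).symm
  choose a ha haj using hsep
  obtain ⟨n, s, r, t, hr, ht, hP, hF, hsub⟩ := exists_mul_mem_range_of_height_eq_one (B := B)
    (hq i) (Set.finite_range a) (Set.range_subset_iff.2 ha) w
  rw [← (q i).over_def P] at ht hP
  have htinv (j : ι) : (algebraMap B K t)⁻¹ ∈ localizationIn K (q j) :=
    mem_localizationIn_of_liesOver (inv_mem_localizationIn ht)
  have hmem (b : B) (j : ι) : algebraMap B K b ∈ localizationIn K (q j) :=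
    mem_localizationIn_of_liesOver (algebraMap_mem (localizationIn K P) b)
  refine ⟨(algebraMap B K t)⁻¹ * (algebraMap S K s * w), ?_, ?_, fun j hj ↦ ?_⟩
  · refine mk_mem_torsionPrincipalParts_of_forall_mul_mem P (n := n) fun p hp ↦ ?_
    obtain ⟨b, hb⟩ := hP p hp
    rw [mul_left_comm, hb]
    exact mul_mem (inv_mem_localizationIn ht) (algebraMap_mem _ b)
  · obtain ⟨b, hb⟩ := hsub
    rw [show w - (algebraMap B K t)⁻¹ * (algebraMap S K s * w) =
      (algebraMap B K t)⁻¹ * ((algebraMap B K t - algebraMap S K s) * w) by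
        field_simp [algebraMap_ne_zero_of_notMem (K := K) ht]]
    exact mul_mem (htinv i) (mem_localizationIn_of_mul hr (hb ▸ hmem b i))
  · obtain ⟨b, hb⟩ := hF _ ⟨⟨j, hj⟩, rfl⟩
    exact mul_mem (htinv j) (mem_localizationIn_of_mul
      (fun h ↦ haj ⟨j, hj⟩ (Ideal.IsPrime.mem_of_pow_mem inferInstance n h)) (hb ▸ hmem b j))

variable {ι : Type*} (q : ι → Ideal S) [∀ i, (q i).IsPrime] [∀ i, (q i).LiesOver P]

variable (K) in
/-- The map sending an element of `Γ_P(K / B_P)` to its principal parts at the `q i`. -/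
def principalPartsMap : torsionPrincipalParts K P →ₗ[localizationIn K P]
    ∀ i, PrincipalParts K P (q i) :=
  LinearMap.pi fun i ↦ (Submodule.factor (Submodule.one_le.2
    (one_mem (localizationOver K P (q i))))).comp (Submodule.subtype _)

lemma principalPartsMap_surjective [Finite ι] (hq : ∀ i, (q i).height = 1)
    (hinj : Function.Injective q) : Function.Surjective (principalPartsMap K P q) := by
  have := Fintype.ofFinite ι
  intro f
  choose w hw using fun i ↦ Submodule.mkQ_surjective _ (f i)
  choose v hv hvi hvj using fun i ↦ exists_mem_torsionPrincipalParts_sub_mem P q hq hinj i (w i)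
  refine ⟨∑ i, ⟨_, hv i⟩, funext fun j ↦ ?_⟩
  have hterm (i : ι) : principalPartsMap K P q ⟨_, hv i⟩ j = Submodule.Quotient.mk (v i) := rfl
  rw [map_sum, Finset.sum_apply, Finset.sum_congr rfl fun i _ ↦ hterm i,
    Finset.sum_eq_single_of_mem j (Finset.mem_univ j)
      fun i _ hij ↦ (Submodule.Quotient.mk_eq_zero _).2 (hvj i j hij.symm), ← hw j]
  exact ((Submodule.Quotient.eq _).2 (hvi j)).symm

variable (K) in
lemma length_torsionBy_torsionPrincipalParts_ne_top {x : localizationIn K P} (hx : x ≠ 0) :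
    Module.length (localizationIn K P)
      (Submodule.torsionBy (localizationIn K P) (torsionPrincipalParts K P) x) ≠ ⊤ :=
  length_torsionBy_primaryComponent_ne_top
    (by rw [Submodule.one_eq_span]; exact Submodule.fg_span_singleton 1) hx

theorem sum_length_torsionBy_principalParts_le [Fintype ι] (hq : ∀ i, (q i).height = 1)
    (hinj : Function.Injective q) {x : localizationIn K P} (hx : x ≠ 0) :
    ∑ i, Module.length (localizationIn K P)
        (Submodule.torsionBy (localizationIn K P) (PrincipalParts K P (q i)) x) ≤
      Module.length (localizationIn K P)
        (Submodule.torsionBy (localizationIn K P) (torsionPrincipalParts K P) x) := by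
  refine (sum_length_torsionBy_le_length_torsionBy_pi _ x).trans ?_
  have htors : IsPowerTorsion (maximalIdeal (localizationIn K P)) (torsionPrincipalParts K P) :=
    isPowerTorsion_primaryComponent
  exact htors.length_torsionBy_le_of_surjective (principalPartsMap_surjective P q hq hinj)
    (length_torsionBy_torsionPrincipalParts_ne_top K P hx)

end Over

lemma exists_fg_forall_map_eq {C M N : Type*} [CommRing C] [AddCommGroup M] [Module C M]
    [AddCommGroup N] [Module C N] [IsNoetherian C N] (f : M →ₗ[C] N) :
    ∃ F : Submodule C M, F.FG ∧ ∀ m, ∃ n ∈ F, f n = f m := by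
  obtain ⟨F, hF, hmap⟩ := exists_fg_map_eq_of_surjective f.surjective_rangeRestrict
    (IsNoetherian.noetherian ⊤)
  refine ⟨F, hF, fun m ↦ ?_⟩
  obtain ⟨n, hn, hnm⟩ : f.rangeRestrict m ∈ F.map f.rangeRestrict := hmap ▸ Submodule.mem_top
  exact ⟨n, hn, congrArg Subtype.val hnm⟩

lemma exists_ne_zero_algebraMap_mem (B : Type*) {S K : Type*} [CommRing B] [Nontrivial B]
    [CommRing S] [IsDomain S] [Algebra B S] [Algebra.IsIntegral B S] [Field K] [Algebra S K]
    [IsFractionRing S K] {q : Ideal S} [q.IsPrime] {I : Ideal (localizationIn K q)} (hI : I ≠ ⊥) :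
    ∃ x : B, x ≠ 0 ∧ algebraMap S (localizationIn K q) (algebraMap B S x) ∈ I := by
  have hunder : I.under S ≠ ⊥ := fun h ↦ hI (by
    rw [← IsLocalization.map_under q.primeCompl (localizationIn K q) I, h, Ideal.map_bot])
  obtain ⟨x, hx, hx0⟩ := Submodule.exists_mem_ne_zero_of_ne_bot
    (Ideal.IsIntegral.comap_ne_bot B hunder)
  exact ⟨x, hx0, hx⟩

section HeightOneLocalization

variable {B S : Type*} [CommRing B] [IsDomain B] [IsNoetherianRing B] [CommRing S] [IsDomain S]
  [Algebra B S] [Algebra.IsIntegral B S] {K : Type*} [Field K] [Algebra B K] [IsFractionRing B K]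
  [Algebra S K] [IsScalarTower B S K] [IsFractionRing S K] (P : Ideal B) [P.IsPrime] {q : Ideal S}
  [q.IsPrime] [q.LiesOver P]

lemma finite_torsionBy_principalParts (hq : q.height = 1) {x : localizationIn K P} (hx : x ≠ 0) :
    Module.Finite (localizationIn K P)
      (Submodule.torsionBy (localizationIn K P) (PrincipalParts K P q) x) := by
  have hle := sum_length_torsionBy_principalParts_le P (fun _ : Unit ↦ q) (fun _ ↦ hq)
    (Function.injective_of_subsingleton _) hx
  rw [Finset.univ_unique, Finset.sum_singleton] at hle
  have hfin := Module.length_ne_top_iff.1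
    (ne_top_of_le_ne_top (length_torsionBy_torsionPrincipalParts_ne_top K P hx) hle)
  have := (isFiniteLength_iff_isNoetherian_isArtinian.1 hfin).1
  exact Module.IsNoetherian.finite _ _

lemma exists_fg_forall_sub_mem (hq : q.height = 1) {x : B} (hx : x ≠ 0)
    {J : Submodule (localizationIn K P) K} (hJ : J ≤ (localizationOver K P q).toSubmodule) :
    ∃ N ≤ J, N.FG ∧ ∀ z ∈ J, ∃ n ∈ N, ∃ w ∈ localizationIn K q, z = n + algebraMap B K x * w := by
  have hxK : algebraMap B K x ≠ 0 := (map_ne_zero_iff _ (IsFractionRing.injective B K)).2 hx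
  have hxC : algebraMap B (localizationIn K P) x ≠ 0 := fun h ↦ hxK (congrArg Subtype.val h)
  have := finite_torsionBy_principalParts (K := K) P hq hxC
  let f : J →ₗ[localizationIn K P] Submodule.torsionBy (localizationIn K P)
      (PrincipalParts K P q) (algebraMap B (localizationIn K P) x) :=
    (((localizationOver K P q).toSubmodule.mkQ.comp
      (LinearMap.mulLeft _ (algebraMap B K x)⁻¹)).domRestrict J).codRestrict _ fun z ↦
        (Submodule.mem_torsionBy_iff _ _).2 ((Submodule.Quotient.mk_eq_zero _).2 (by
          have : algebraMap B K x * ((algebraMap B K x)⁻¹ * z) ∈ localizationIn K q := by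
            rw [mul_inv_cancel_left₀ hxK]
            exact hJ z.2
          exact this))
  obtain ⟨N, hN, hNmap⟩ := exists_fg_forall_map_eq f
  refine ⟨N.map J.subtype, Submodule.map_subtype_le J N, hN.map _, fun z hz ↦ ?_⟩
  obtain ⟨n, hn, hnz⟩ := hNmap ⟨z, hz⟩
  have hw : (algebraMap B K x)⁻¹ * z - (algebraMap B K x)⁻¹ * n ∈ localizationIn K q :=
    (Submodule.Quotient.eq (localizationOver K P q).toSubmodule).1 (congrArg Subtype.val hnz).symm
  exact ⟨n, ⟨n, hn, rfl⟩, _, hw, by rw [mul_sub, mul_inv_cancel_left₀ hxK,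
    mul_inv_cancel_left₀ hxK, add_sub_cancel]⟩

end HeightOneLocalization

lemma isNoetherianRing_localizationIn_of_height_eq_one (B : Type*) {S K : Type*} [CommRing B]
    [IsDomain B] [IsNoetherianRing B] [CommRing S] [IsDomain S] [Algebra B S]
    [Algebra.IsIntegral B S] [Field K] [Algebra B K] [IsFractionRing B K] [Algebra S K]
    [IsScalarTower B S K] [IsFractionRing S K] {q : Ideal S} [q.IsPrime] (hq : q.height = 1) :
    IsNoetherianRing (localizationIn K q) := by
  refine (isNoetherianRing_iff_ideal_fg _).2 fun I ↦ ?_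
  obtain rfl | hI := eq_or_ne I ⊥
  · exact Submodule.fg_bot
  obtain ⟨x, hx, hxI⟩ := exists_ne_zero_algebraMap_mem B hI
  let : Algebra (localizationIn K (q.under B)) (localizationIn K q) :=
    RingHom.toAlgebra (Subring.inclusion (R := K) (S := (localizationIn K (q.under B)).toSubring)
      (T := (localizationIn K q).toSubring) fun _ ↦ mem_localizationIn_of_liesOver)
  have : IsScalarTower (localizationIn K (q.under B)) (localizationIn K q) K :=
    IsScalarTower.of_algebraMap_eq fun _ ↦ rfl
  let J : Submodule (localizationIn K q) K :=
    Submodule.map (Algebra.linearMap (localizationIn K q) K) I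
  obtain ⟨N, hNJ, ⟨G, rfl⟩, hN⟩ := exists_fg_forall_sub_mem (q.under B) hq hx
    (J := J.restrictScalars _) (by rintro _ ⟨a, -, rfl⟩; exact a.2)
  have hJ : J = Submodule.span _ (insert (algebraMap B K x) (G : Set K)) := by
    refine le_antisymm (fun z hz ↦ ?_) (Submodule.span_le.2 (Set.insert_subset ?_
      (Submodule.subset_span.trans hNJ)))
    · obtain ⟨n, hn, w, hw, rfl⟩ := hN z hz
      refine add_mem (Submodule.span_mono (Set.subset_insert _ _)
        (Submodule.span_le_restrictScalars (localizationIn K (q.under B)) _ _ hn)) ?_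
      rw [mul_comm]
      exact Submodule.smul_mem _ (⟨w, hw⟩ : localizationIn K q)
        (Submodule.subset_span (Set.mem_insert _ _))
    · exact ⟨_, hxI, (IsScalarTower.algebraMap_apply B S K x).symm⟩
  have hfg : J.FG := hJ ▸ Submodule.fg_span (G.finite_toSet.insert _)
  exact Submodule.fg_of_fg_map_injective _ Subtype.val_injective hfg

theorem isDiscreteValuationRing_localizationIn (B : Type*) {S K : Type*} [CommRing B]
    [IsDomain B] [IsNoetherianRing B] [CommRing S] [IsDomain S] [Algebra B S]
    [Algebra.IsIntegral B S] [Field K] [Algebra B K] [IsFractionRing B K] [Algebra S K]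
    [IsScalarTower B S K] [IsFractionRing S K] [IsIntegrallyClosed S] {q : Ideal S} [q.IsPrime]
    (hq : q.height = 1) : IsDiscreteValuationRing (localizationIn K q) := by
  have := isNoetherianRing_localizationIn_of_height_eq_one B (K := K) hq
  have hheight : (maximalIdeal (localizationIn K q)).height = 1 := by
    exact_mod_cast (maximalIdeal_height_eq_ringKrullDim).trans
      (hq ▸ IsLocalization.AtPrime.ringKrullDim_eq_height q (localizationIn K q))
  have hbot : maximalIdeal (localizationIn K q) ≠ ⊥ := fun h ↦ by simp [h] at hheight
  have hfield : ¬IsField (localizationIn K q) := fun h ↦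
    hbot (IsLocalRing.isField_iff_maximalIdeal_eq.1 h)
  apply ((IsDiscreteValuationRing.TFAE (localizationIn K q) hfield).out 0 3).2
  refine ⟨isIntegrallyClosed_of_isLocalization _ _ q.primeCompl_le_nonZeroDivisors,
    maximalIdeal _, ⟨hbot, inferInstance⟩, fun Q ⟨hQ, hQp⟩ ↦ ?_⟩
  exact eq_of_le_of_height_le_one hheight.le hQ (le_maximalIdeal hQp.ne_top)

lemma mem_minimalPrimes_of_pow_le {R : Type*} [CommRing R] {I P : Ideal R} [P.IsPrime] {n : ℕ}
    (hle : I ≤ P) (hpow : P ^ n ≤ I) : P ∈ I.minimalPrimes :=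
  ⟨⟨inferInstance, hle⟩, fun _ hQ _ ↦ hQ.1.le_of_pow_le (hpow.trans hQ.2)⟩

lemma one_le_length_torsionBy_principalParts {B S K : Type*} [CommRing B]
    [IsDomain B] [CommRing S] [IsDomain S] [Algebra B S] [Field K] [Algebra B K]
    [IsFractionRing B K] [Algebra S K] [IsScalarTower B S K] [IsFractionRing S K] {q : Ideal S}
    [q.IsPrime] (P : Ideal B) [P.IsPrime] [q.LiesOver P] {x : B}
    (hx : x ∈ P) (hx0 : x ≠ 0) : 1 ≤ Module.length (localizationIn K P)
      (Submodule.torsionBy (localizationIn K P) (PrincipalParts K P q)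
        (algebraMap B (localizationIn K P) x)) := by
  have hxS : algebraMap B S x ≠ 0 := fun h ↦ hx0 (IsFractionRing.injective B K (by
    rw [IsScalarTower.algebraMap_apply B S K, h, map_zero, map_zero]))
  have hxK : algebraMap B K x ≠ 0 := (map_ne_zero_iff _ (IsFractionRing.injective B K)).2 hx0
  have hinv := inv_notMem_localizationIn (K := K) ((q.mem_of_liesOver P x).1 hx) hxS
  rw [← IsScalarTower.algebraMap_apply] at hinv
  refine Order.one_le_iff_pos.2 (Module.length_pos_iff.2 (Submodule.nontrivial_iff_ne_bot.2 ?_))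
  refine (Submodule.ne_bot_iff _).2 ⟨Submodule.Quotient.mk (algebraMap B K x)⁻¹,
    (Submodule.mem_torsionBy_iff _ _).2 ((Submodule.Quotient.mk_eq_zero _).2 ?_),
    fun h ↦ hinv ((Submodule.Quotient.mk_eq_zero (localizationOver K P q).toSubmodule).1 h)⟩
  have : algebraMap B K x * (algebraMap B K x)⁻¹ ∈ localizationIn K q := by
    rw [mul_inv_cancel₀ hxK]
    exact one_mem _
  exact this

section FiniteHeightOne

variable {B S K : Type*} [CommRing B] [IsDomain B] [IsNoetherianRing B] [CommRing S] [IsDomain S]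
  [Algebra B S] [Algebra.IsIntegral B S] [Field K] [Algebra B K] [IsFractionRing B K]
  [Algebra S K] [IsScalarTower B S K] [IsFractionRing S K] {q : Ideal S} [q.IsPrime]

variable (K) in
lemma exists_under_eq_colon_one (hq : q.height = 1) :
    ∃ v : K, q.under B = (1 : Submodule B K).colon {v} := by
  obtain ⟨x, hx, hx0⟩ := Submodule.exists_mem_ne_zero_of_ne_bot
    (Ideal.IsIntegral.comap_ne_bot B (I := q) fun h ↦ by simp [h] at hq)
  have hxK : algebraMap B K x ≠ 0 := (map_ne_zero_iff _ (IsFractionRing.injective B K)).2 hx0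
  obtain ⟨n, s, r, t, hr, ht, hpow, -, b, hb⟩ := exists_mul_mem_range_of_height_eq_one (B := B) hq
    Set.finite_empty (Set.empty_subset _) (algebraMap B K x)⁻¹
  refine Submodule.exists_eq_colon_of_mem_minimalPrimes
    (x := algebraMap S K s * (algebraMap B K x)⁻¹)
    (mem_minimalPrimes_of_pow_le (n := n) (fun c hc ↦ ?_) fun p hp ↦ ?_)
  · obtain ⟨b', hb'⟩ := Submodule.mem_one.1 (Submodule.mem_colon_singleton.1 hc)
    have hrct : r * algebraMap B S (c * t) =
        algebraMap B S x * (algebraMap B S (c * b) + r * algebraMap B S b') := by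
      apply IsFractionRing.injective S K
      simp only [map_mul, map_add, ← IsScalarTower.algebraMap_apply, hb', ← hb, Algebra.smul_def]
      field_simp
      ring
    have hmem : r * algebraMap B S (c * t) ∈ q := hrct ▸ q.mul_mem_right _ hx
    exact (((inferInstance : (q.under B).IsPrime).mem_or_mem
      ((Ideal.IsPrime.mem_or_mem inferInstance hmem).resolve_left hr)).resolve_right ht)
  · obtain ⟨b', hb'⟩ := hpow p hp
    exact Submodule.mem_colon_singleton.2 (Submodule.mem_one.2 ⟨b', by
      rw [← hb', Algebra.smul_def]⟩)

lemma under_mem_associatedPrimes (K : Type*) [Field K] [Algebra B K] [IsFractionRing B K]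
    [Algebra S K] [IsScalarTower B S K] [IsFractionRing S K] (hq : q.height = 1) {x : B}
    (hx0 : x ≠ 0) (hx : x ∈ q.under B) : q.under B ∈ associatedPrimes B (B ⧸ Ideal.span {x}) := by
  obtain ⟨v, hv⟩ := exists_under_eq_colon_one (B := B) K hq
  obtain ⟨b, hb⟩ := Submodule.mem_one.1 (Submodule.mem_colon_singleton.1 (hv ▸ hx))
  refine isAssociatedPrime_iff.2 ⟨inferInstance, Submodule.Quotient.mk b, ?_⟩
  ext c
  rw [hv, Submodule.mem_colon_singleton, Submodule.mem_one, Submodule.mem_colon_singleton,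
    Submodule.mem_bot, ← Submodule.Quotient.mk_smul, Submodule.Quotient.mk_eq_zero,
    Ideal.mem_span_singleton]
  refine exists_congr fun e ↦ ?_
  have hxK : algebraMap B K x ≠ 0 := (map_ne_zero_iff _ (IsFractionRing.injective B K)).2 hx0
  rw [← (IsFractionRing.injective B K).eq_iff, smul_eq_mul, map_mul, map_mul, hb,
    Algebra.smul_def, Algebra.smul_def, mul_left_comm, mul_right_inj' hxK, eq_comm]

variable (S) in
lemma finite_setOf_height_eq_one_liesOver (K : Type*) [Field K] [Algebra B K]
    [IsFractionRing B K] [Algebra S K] [IsScalarTower B S K] [IsFractionRing S K]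
    {P : Ideal B} [P.IsPrime] (hP : P ≠ ⊥) :
    {q : Ideal S | q.IsPrime ∧ q.height = 1 ∧ q.LiesOver P}.Finite := by
  obtain ⟨x, hx, hx0⟩ := Submodule.exists_mem_ne_zero_of_ne_bot hP
  have hxC : algebraMap B (localizationIn K P) x ≠ 0 := fun h ↦
    hx0 (IsFractionRing.injective B K (by simpa using congrArg Subtype.val h))
  by_contra hinf
  obtain ⟨n, hn⟩ := ENat.ne_top_iff_exists.1
    (length_torsionBy_torsionPrincipalParts_ne_top K P hxC)
  obtain ⟨F, hF, hcard⟩ := Set.Infinite.exists_subset_card_eq hinf n.succ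
  have (q : F) : (q : Ideal S).IsPrime := (hF q.2).1
  have (q : F) : (q : Ideal S).LiesOver P := (hF q.2).2.2
  have hle := (Finset.sum_le_sum fun (q : F) _ ↦
    one_le_length_torsionBy_principalParts (q := (q : Ideal S)) P hx hx0).trans
    (sum_length_torsionBy_principalParts_le (K := K) P (fun q : F ↦ (q : Ideal S))
      (fun q ↦ (hF q.2).2.1) Subtype.val_injective hxC)
  rw [Finset.sum_const, Finset.card_univ, Fintype.card_coe, hcard, nsmul_one,
    ← hn, Nat.cast_le] at hle
  exact absurd hle (Nat.not_succ_le_self _)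

theorem finite_setOf_height_eq_one_mem (B : Type*) {S : Type*} [CommRing B] [IsDomain B]
    [IsNoetherianRing B] [CommRing S] [IsDomain S] [Algebra B S] [Algebra.IsIntegral B S]
    (K : Type*) [Field K] [Algebra B K] [IsFractionRing B K] [Algebra S K] [IsScalarTower B S K]
    [IsFractionRing S K] {x : S} (hx : x ≠ 0) :
    {q : Ideal S | q.IsPrime ∧ q.height = 1 ∧ x ∈ q}.Finite := by
  obtain ⟨b, hb0, hb⟩ := (Algebra.IsIntegral.isIntegral (R := B) x).isAlgebraic.exists_nonzero_dvd
    (mem_nonZeroDivisors_of_ne_zero hx)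
  have hfin (P : associatedPrimes B (B ⧸ Ideal.span {b})) :
      {q : Ideal S | q.IsPrime ∧ q.height = 1 ∧ q.LiesOver P.1}.Finite := by
    have : P.1.IsPrime := P.2.isPrime
    have hbP : b ∈ P.1 := P.2.annihilator_le (by
      rw [Submodule.annihilator_top, Ideal.annihilator_quotient]
      exact Ideal.mem_span_singleton_self b)
    exact finite_setOf_height_eq_one_liesOver S K fun h ↦ hb0 (by simpa [h] using hbP)
  have := (associatedPrimes.finite B (B ⧸ Ideal.span {b})).to_subtype
  exact (Set.finite_iUnion hfin).subset fun q ⟨_, hq, hxq⟩ ↦ Set.mem_iUnion.2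
    ⟨⟨_, under_mem_associatedPrimes K hq hb0 (q.mem_of_dvd hb hxq)⟩, ‹_›, hq, inferInstance⟩

end FiniteHeightOne

section ResidueField

variable {B S K : Type*} [CommRing B] [CommRing S] [IsDomain S]
  [Algebra B S] [Field K] [Algebra B K] [Algebra S K] [IsScalarTower B S K] [IsFractionRing S K]
  {q : Ideal S} [q.IsPrime]

variable (K q) in
/-- The maximal ideal of `S_q` as a submodule of the fraction field. -/
def maximalIdealIn : Submodule (localizationIn K q) K :=
  Submodule.map (Algebra.linearMap (localizationIn K q) K) (maximalIdeal (localizationIn K q))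

lemma algebraMap_mem_maximalIdealIn {a : S} : algebraMap S K a ∈ maximalIdealIn K q ↔ a ∈ q := by
  rw [← IsLocalization.AtPrime.to_map_mem_maximal_iff (localizationIn K q) q]
  exact ⟨fun ⟨w, hw, hwa⟩ ↦ (Subtype.ext hwa : w = algebraMap S _ a) ▸ hw, fun h ↦ ⟨_, h, rfl⟩⟩

lemma algebraMap_mul_mem_maximalIdealIn (b : B) {v : K} (hv : v ∈ maximalIdealIn K q) :
    algebraMap B K b * v ∈ maximalIdealIn K q := by
  rw [IsScalarTower.algebraMap_apply B S K]
  exact (maximalIdealIn K q).smul_mem (algebraMap S (localizationIn K q) (algebraMap B S b)) hv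

lemma exists_mul_sub_mem_maximalIdealIn_of_mem_span [IsDomain B] [IsFractionRing B K]
    {D : Subalgebra B S} {G : Set K} (hG : ∀ g ∈ G, ∃ t ∉ q.under B, ∃ d ∈ D,
      algebraMap B K t * g - algebraMap S K d ∈ maximalIdealIn K q)
    {n : K} (hn : n ∈ Submodule.span (localizationIn K (q.under B)) G) :
    ∃ t ∉ q.under B, ∃ d ∈ D, algebraMap B K t * n - algebraMap S K d ∈ maximalIdealIn K q := by
  have hprime : (q.under B).IsPrime := inferInstance
  induction hn using Submodule.span_induction with
  | mem g hg => exact hG g hg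
  | zero => exact ⟨1, Ideal.one_notMem _, 0, zero_mem D, by simp⟩
  | add n n' _ _ hn hn' =>
    obtain ⟨t, ht, d, hd, htd⟩ := hn
    obtain ⟨t', ht', d', hd', htd'⟩ := hn'
    refine ⟨t * t', hprime.mul_notMem ht ht', t' • d + t • d',
      add_mem (D.smul_mem hd _) (D.smul_mem hd' _), ?_⟩
    convert add_mem (algebraMap_mul_mem_maximalIdealIn t' htd)
      (algebraMap_mul_mem_maximalIdealIn t htd') using 1
    simp only [Algebra.smul_def, map_mul, map_add, ← IsScalarTower.algebraMap_apply]
    ring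
  | smul c n _ hn =>
    obtain ⟨t, ht, d, hd, htd⟩ := hn
    obtain ⟨s, hs, b, hsb⟩ := mem_localizationIn.1 c.2
    refine ⟨t * s, hprime.mul_notMem ht hs, b • d, D.smul_mem hd _, ?_⟩
    convert algebraMap_mul_mem_maximalIdealIn b htd using 1
    simp only [Algebra.smul_def, map_mul, ← IsScalarTower.algebraMap_apply, ← hsb,
      Subalgebra.algebraMap_def, Algebra.algebraMap_self_apply]
    ring

variable [Algebra.IsIntegral B S]

lemma exists_mul_sub_mem_maximalIdealIn {g : K} (hg : g ∈ localizationIn K q) :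
    ∃ t ∉ q.under B, ∃ a : S, algebraMap B K t * g - algebraMap S K a ∈ maximalIdealIn K q := by
  obtain ⟨s, hs, a, hsa⟩ := mem_localizationIn.1 hg
  obtain ⟨t, ht, u, htu⟩ := exists_sub_mul_mem_of_notMem (B := B) hs
  refine ⟨t, ht, u * a, ?_⟩
  have hmem := (maximalIdealIn K q).smul_mem ⟨g, hg⟩ (algebraMap_mem_maximalIdealIn.2 htu)
  convert hmem using 1
  rw [Subalgebra.smul_def, smul_eq_mul, map_sub, map_mul, map_mul, ← hsa,
    ← IsScalarTower.algebraMap_apply]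
  ring

variable (K) in
theorem exists_finite_subalgebra_forall_mul_sub_mem [IsDomain B] [IsNoetherianRing B]
    [IsFractionRing B K] (hq : q.height = 1) :
    ∃ D : Subalgebra B S, Module.Finite B D ∧
      ∀ z, ∃ t ∉ q.under B, ∃ d ∈ D, algebraMap B S t * z - d ∈ q := by
  obtain ⟨x, hx, hx0⟩ := Submodule.exists_mem_ne_zero_of_ne_bot
    (Ideal.IsIntegral.comap_ne_bot B (I := q) fun h ↦ by simp [h] at hq)
  obtain ⟨N, hNW, ⟨G, rfl⟩, hN⟩ := exists_fg_forall_sub_mem (q.under B) hq hx0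
    (le_refl (localizationOver K (q.under B) q).toSubmodule)
  choose t ht a ha using fun g : G ↦ exists_mul_sub_mem_maximalIdealIn (B := B)
    (hNW (Submodule.subset_span g.2) : (g : K) ∈ localizationIn K q)
  let D := Algebra.adjoin B (Set.range a)
  refine ⟨D, Module.Finite.iff_fg.2 (fg_adjoin_of_finite (Set.finite_range a)
    fun y _ ↦ Algebra.IsIntegral.isIntegral y), fun z ↦ ?_⟩
  obtain ⟨n, hn, w, hw, hz⟩ := hN (algebraMap S K z) (algebraMap_mem (localizationIn K q) z)
  obtain ⟨t, ht, d, hd, htd⟩ := exists_mul_sub_mem_maximalIdealIn_of_mem_span (D := D)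
    (fun g hg ↦ ⟨_, ht ⟨g, hg⟩, _, Algebra.subset_adjoin (Set.mem_range_self _), ha ⟨g, hg⟩⟩) hn
  refine ⟨t, ht, d, hd, algebraMap_mem_maximalIdealIn (K := K).1 ?_⟩
  have hxw := (maximalIdealIn K q).smul_mem (⟨w, hw⟩ : localizationIn K q)
    (algebraMap_mem_maximalIdealIn.2 hx)
  convert add_mem htd (algebraMap_mul_mem_maximalIdealIn t hxw) using 1
  rw [map_sub, map_mul, hz, Subalgebra.smul_def, smul_eq_mul, ← IsScalarTower.algebraMap_apply,
    ← IsScalarTower.algebraMap_apply]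
  ring

end ResidueField

lemma exists_succ_le_of_length_lt {C M : Type*} [Ring C] [AddCommGroup M] [Module C M]
    {N : ℕ → Submodule C M} (hN : Monotone N) {n : ℕ} (hn : Module.length C M < n) :
    ∃ k < n, N (k + 1) ≤ N k := by
  by_contra! hlt
  let s : LTSeries (Submodule C M) :=
    { length := n
      toFun i := N i
      step i := lt_of_le_not_ge (hN (Nat.le_succ i)) (hlt i i.2) }
  exact hn.not_ge (by
    rw [← WithBot.coe_le_coe, Module.coe_length]
    exact Order.LTSeries.length_le_krullDim s)

lemma exists_forall_eq_add_smul {C K : Type*} [CommRing C] [IsLocalRing C] [IsNoetherianRing C]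
    [Field K] [Algebra C K] [FaithfulSMul C K] {L : Submodule C K} (hL : L.FG) {x : C}
    (hx : x ≠ 0) {M : ℕ → Submodule C K} (hM : Monotone M) (hfg : ∀ k, (M k).FG)
    (hLM : L ≤ M 0) (htors : ∀ k, ∀ v ∈ M k, ∃ n, ∀ c ∈ maximalIdeal C ^ n, c • v ∈ L) :
    ∃ k r, ∀ v ∈ M (k + 1), ∃ u ∈ M k, ∃ w ∈ M r, v = u + x • w := by
  obtain ⟨h, hh⟩ := ENat.ne_top_iff_exists.1 (length_torsionBy_primaryComponent_ne_top hL hx)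
  let U := (M (h + 1)).map L.mkQ
  have : Module.Finite C U := Module.Finite.iff_fg.2 ((hfg _).map _)
  have hU : U ≤ Ideal.primaryComponent (K ⧸ L) (maximalIdeal C) := by
    rintro _ ⟨v, hv, rfl⟩
    obtain ⟨n, hn⟩ := htors _ v hv
    exact (Ideal.primaryComponent_mem _ _ _).2 ⟨n, (Submodule.mem_torsionBySet_iff _ _).2
      fun c ↦ (Submodule.Quotient.mk_eq_zero _).2 (hn c c.2)⟩
  have hUtors : IsPowerTorsion (maximalIdeal C) U :=
    isPowerTorsion_primaryComponent.of_injective (Submodule.inclusion_injective hU)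
  let I := LinearMap.range (LinearMap.lsmul C U x)
  have hlen : Module.length C (U ⧸ I) < (h + 1 : ℕ) := by
    rw [← length_torsionBy_eq_length_quotient hUtors.isFiniteLength]
    refine (length_torsionBy_le_of_injective (Submodule.inclusion_injective hU) x).trans_lt ?_
    rw [← hh]
    exact_mod_cast h.lt_succ_self
  obtain ⟨k, hk, hle⟩ := exists_succ_le_of_length_lt
    (N := fun k ↦ (((M k).map L.mkQ).comap U.subtype).map I.mkQ)
    (fun i j hij ↦ Submodule.map_mono (Submodule.comap_mono (Submodule.map_mono (hM hij)))) hlen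
  refine ⟨k, h + 1, fun v hv ↦ ?_⟩
  obtain ⟨⟨_, _⟩, ⟨u, hu, rfl⟩, huv⟩ :=
    hle ⟨⟨L.mkQ v, v, hM hk hv, rfl⟩, ⟨v, hv, rfl⟩, rfl⟩
  obtain ⟨⟨_, w, hw, rfl⟩, hwuv⟩ := (Submodule.Quotient.eq I).1 huv.symm
  have hmem : v - u - x • w ∈ L := (Submodule.Quotient.mk_eq_zero _).1
    (sub_eq_zero.2 (congrArg Subtype.val hwuv).symm)
  exact ⟨u + (v - u - x • w), add_mem hu (hM k.zero_le (hLM hmem)), w, hw, by abel⟩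

open Polynomial in
lemma mem_range_or_inv_mem_range_of_isUnit_coeff {W K : Type*} [CommRing W] [IsLocalRing W]
    [IsIntegrallyClosed W] [Field K] [Algebra W K] [IsFractionRing W K] {z : K} {f : W[X]}
    (hf : aeval z f = 0) {k : ℕ} (hk : IsUnit (f.coeff k)) :
    z ∈ (algebraMap W K).range ∨ z⁻¹ ∈ (algebraMap W K).range := by
  induction hn : f.natDegree using Nat.strong_induction_on generalizing f k with
  | _ n ih =>
  obtain ⟨b, hb⟩ := IsIntegrallyClosed.isIntegral_iff.1 (isIntegral_leadingCoeff_smul f z hf)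
  rw [Algebra.smul_def] at hb
  by_cases hlead : IsUnit f.leadingCoeff
  · obtain ⟨u, hu⟩ := hlead
    exact .inl ⟨↑u⁻¹ * b, by rw [map_mul, hb, ← hu, ← mul_assoc, ← map_mul, u.inv_mul, map_one,
      one_mul]⟩
  by_cases hbu : IsUnit b
  · obtain ⟨u, rfl⟩ := hbu
    refine .inr ⟨↑u⁻¹ * f.leadingCoeff, eq_inv_of_mul_eq_one_left ?_⟩
    rw [map_mul, mul_assoc, ← hb, ← map_mul, u.inv_mul, map_one]
  have hkn : k ≠ n := fun h ↦ hlead (by rwa [leadingCoeff, hn, ← h])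
  have hkn' : k < n := lt_of_le_of_ne (hn ▸ le_natDegree_of_ne_zero hk.ne_zero) hkn
  obtain ⟨m, rfl⟩ : ∃ m, n = m + 1 := ⟨n - 1, by omega⟩
  let g : W[X] := f.eraseLead + C b * X ^ m
  have hg : aeval z g = 0 := by
    rw [← f.eraseLead_add_C_mul_X_pow] at hf
    simp only [map_add, map_mul, map_pow, aeval_C, aeval_X, hn] at hf
    simp only [g, map_add, map_mul, map_pow, aeval_C, aeval_X, hb]
    linear_combination hf
  have hgk : IsUnit (g.coeff k) := by
    simp only [g, coeff_add, coeff_C_mul, coeff_X_pow, eraseLead_coeff_of_ne _ (hn ▸ hkn)]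
    split_ifs
    · rw [← add_neg_cancel_right (f.coeff k) b] at hk
      rw [mul_one]
      exact (IsLocalRing.isUnit_or_isUnit_of_isUnit_add hk).resolve_right
        (hbu ∘ (IsUnit.neg_iff b).1)
    · simpa using hk
  exact ih g.natDegree (Nat.lt_succ_of_le (natDegree_add_le_of_degree_le
    ((eraseLead_natDegree_le f).trans (by omega)) (natDegree_C_mul_X_pow_le b m))) hg hgk rfl

lemma smul_pow_mem_of_mem_pow {R A : Type*} [CommRing R] [CommRing A] [Algebra R A]
    {D : Subalgebra R A} {I : Ideal R} {z : A} (hz : ∀ c ∈ I, c • z ∈ D) (n : ℕ) :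
    ∀ c ∈ I ^ n, c • z ^ n ∈ D := by
  have hle : I ^ n ≤ D.toSubmodule.comap (LinearMap.toSpanSingleton R A (z ^ n)) := by
    induction n with
    | zero => exact fun c _ ↦ by simpa using D.smul_mem D.one_mem c
    | succ n ih =>
      rw [pow_succ]
      refine Ideal.mul_le.2 fun a ha b hb ↦ ?_
      simpa [pow_succ, mul_smul, smul_comm a b] using D.mul_mem (ih ha) (hz b hb)
  exact hle

open Polynomial in
lemma smul_aeval_mem_of_mem_pow {R A : Type*} [CommRing R] [CommRing A] [Algebra R A]
    {D : Subalgebra R A} {I : Ideal R} {z : A} (hz : ∀ c ∈ I, c • z ∈ D) {n : ℕ} {p : D[X]}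
    (hp : p ∈ degreeLT D n) {c : R} (hc : c ∈ I ^ n) : c • aeval z p ∈ D := by
  obtain rfl | hp0 := eq_or_ne p 0
  · simp
  rw [aeval_eq_sum_range' ((natDegree_lt_iff_degree_lt hp0).2 (mem_degreeLT.1 hp)),
    Finset.smul_sum]
  refine sum_mem fun i hi ↦ ?_
  rw [smul_comm, Subalgebra.smul_def]
  exact D.mul_mem (p.coeff i).2
    (smul_pow_mem_of_mem_pow hz i c (Ideal.pow_le_pow_right (Finset.mem_range.1 hi).le hc))

open Polynomial in
lemma exists_aeval_eq_zero_and_coeff_eq_one_sub_smul {R K : Type*} [CommRing R] [IsLocalRing R]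
    [IsNoetherianRing R] [Field K] [Algebra R K] [FaithfulSMul R K] {D : Subalgebra R K}
    [Module.Finite R D] {x : R} (hx : x ≠ 0) {z : K} (hz : ∀ c ∈ maximalIdeal R, c • z ∈ D) :
    ∃ f : D[X], aeval z f = 0 ∧ ∃ k d, f.coeff k = 1 - x • d := by
  classical
  let M (k : ℕ) : Submodule R K :=
    ((degreeLT D (k + 1)).map (aeval z).toLinearMap).restrictScalars R
  have hfg (k : ℕ) : (M k).FG := by
    refine Submodule.FG.restrictScalars ?_
    rw [degreeLT_eq_span_X_pow]
    exact (Submodule.fg_span (Finset.finite_toSet _)).map _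
  have htors (k : ℕ) : ∀ v ∈ M k, ∃ n, ∀ c ∈ maximalIdeal R ^ n, c • v ∈ D.toSubmodule := by
    rintro _ ⟨p, hp, rfl⟩
    exact ⟨k + 1, fun c ↦ smul_aeval_mem_of_mem_pow hz hp⟩
  have hDM : D.toSubmodule ≤ M 0 := fun d hd ↦
    ⟨C ⟨d, hd⟩, mem_degreeLT.2 (degree_C_le.trans_lt (by simp)), by simp⟩
  obtain ⟨k, r, h⟩ := exists_forall_eq_add_smul (Module.Finite.iff_fg.1 ‹_›) hx (M := M)
    (fun i j hij ↦ Submodule.map_mono (degreeLT_mono (by omega))) hfg hDM htors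
  obtain ⟨_, ⟨g, hg, rfl⟩, _, ⟨e, -, rfl⟩, hge⟩ := h (z ^ (k + 1))
    ⟨X ^ (k + 1), mem_degreeLT.2 (by rw [degree_X_pow]; exact_mod_cast (k + 1).lt_succ_self),
      by simp⟩
  refine ⟨X ^ (k + 1) - g - x • e, ?_, k + 1, e.coeff (k + 1), ?_⟩
  · simp only [map_sub, map_pow, aeval_X, hge]
    rw [← algebraMap_smul D x e, map_smul, algebraMap_smul]
    simp only [AlgHom.toLinearMap_apply, add_sub_cancel_left, sub_self]
  · rw [coeff_sub, coeff_sub, coeff_X_pow_self, coeff_eq_zero_of_degree_lt (mem_degreeLT.1 hg),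
      sub_zero, coeff_smul]

lemma exists_isPrime_colon_smul {B M : Type*} [CommRing B] [IsNoetherianRing B]
    [AddCommGroup M] [Module B M] {N : Submodule B M} {z : M} (hz : z ∉ N) :
    ∃ b : B, (N.colon {b • z}).IsPrime := by
  let v : Submodule.span B {N.mkQ z} := ⟨N.mkQ z, Submodule.mem_span_singleton_self _⟩
  obtain ⟨P, hP, -⟩ := exists_le_isAssociatedPrime_of_isNoetherianRing B v fun h ↦
    hz ((Submodule.Quotient.mk_eq_zero N).1 (congrArg Subtype.val h))
  obtain ⟨hprime, ⟨_, hw⟩, rfl⟩ := isAssociatedPrime_iff.1 hP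
  obtain ⟨b, rfl⟩ := Submodule.mem_span_singleton.1 hw
  refine ⟨b, ?_⟩
  convert hprime using 1
  ext c
  rw [Submodule.mem_colon_singleton, Submodule.mem_colon_singleton, Submodule.mem_bot,
    ← Submodule.Quotient.mk_eq_zero, Subtype.ext_iff]
  rfl

section IntersectionOfLocalizations

variable {B S K : Type*} [CommRing B] [IsDomain B] [IsNoetherianRing B] [CommRing S] [IsDomain S]
  [Algebra B S] [Algebra.IsIntegral B S] [Field K] [Algebra B K] [IsFractionRing B K] [Algebra S K]
  [IsScalarTower B S K] [IsFractionRing S K]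

lemma exists_finite_subalgebra_forall_smul_mem {P : Ideal B} [P.IsPrime] {q : Ideal S} [q.IsPrime]
    [q.LiesOver P] {z : K} (hz : ∀ p ∈ P, ∃ a : S, algebraMap B K p * z = algebraMap S K a) :
    ∃ D ≤ localizationOver K P q, Module.Finite (localizationIn K P) D ∧
      ∀ c ∈ maximalIdeal (localizationIn K P), c • z ∈ D := by
  obtain ⟨G, hG⟩ := IsNoetherian.noetherian P
  let T : Set K := (fun p ↦ algebraMap B K p * z) '' G
  have hT (t) (ht : t ∈ T) : ∃ a : S, t = algebraMap S K a := by
    obtain ⟨p, hp, rfl⟩ := ht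
    exact hz p (hG ▸ Submodule.subset_span hp)
  refine ⟨Algebra.adjoin _ T, Algebra.adjoin_le fun t ht ↦ ?_, Module.Finite.iff_fg.2
    (fg_adjoin_of_finite (G.finite_toSet.image _) fun t ht ↦ ?_), fun c hc ↦ ?_⟩
  · obtain ⟨a, rfl⟩ := hT t ht
    exact algebraMap_mem (localizationIn K q) a
  · obtain ⟨a, rfl⟩ := hT t ht
    exact ((Algebra.IsIntegral.isIntegral (R := B) a).map
      (IsScalarTower.toAlgHom B S K)).tower_top
  · have hle : P.map (algebraMap B (localizationIn K P)) ≤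
        (Algebra.adjoin _ T).toSubmodule.comap (LinearMap.toSpanSingleton _ K z) :=
      Ideal.map_le_iff_le_comap.2 (hG.ge.trans (Submodule.span_le.2 fun p hp ↦
        Algebra.subset_adjoin ⟨p, hp, rfl⟩))
    rw [← IsLocalization.AtPrime.map_eq_maximalIdeal P (localizationIn K P)] at hc
    exact hle hc

variable [IsIntegrallyClosed S]

lemma mem_or_inv_mem_localizationIn {P : Ideal B} [P.IsPrime] (hP : P ≠ ⊥) {q : Ideal S}
    [q.IsPrime] [q.LiesOver P] {z : K}
    (hz : ∀ p ∈ P, ∃ a : S, algebraMap B K p * z = algebraMap S K a) :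
    z ∈ localizationIn K q ∨ z⁻¹ ∈ localizationIn K q := by
  obtain ⟨D, hDq, hD, hDz⟩ := exists_finite_subalgebra_forall_smul_mem (q := q) hz
  obtain ⟨x, hx, hx0⟩ := Submodule.exists_mem_ne_zero_of_ne_bot hP
  have hxC : algebraMap B (localizationIn K P) x ≠ 0 := fun h ↦
    hx0 (IsFractionRing.injective B K (by simpa using congrArg Subtype.val h))
  obtain ⟨f, hf, k, d, hk⟩ := exists_aeval_eq_zero_and_coeff_eq_one_sub_smul hxC hDz
  have : IsIntegrallyClosed (localizationIn K q) :=
    isIntegrallyClosed_of_isLocalization _ q.primeCompl q.primeCompl_le_nonZeroDivisors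
  let φ : D →+* localizationIn K q := (algebraMap D K).codRestrict _ fun d ↦ hDq d.2
  have hunit : IsUnit ((f.map φ).coeff k) := by
    rw [Polynomial.coeff_map, hk, map_sub, map_one]
    refine IsLocalRing.isUnit_one_sub_self_of_mem_nonunits _ ?_
    have hφ : φ (algebraMap B (localizationIn K P) x • d) =
        algebraMap S (localizationIn K q) (algebraMap B S x) * φ d :=
      Subtype.ext (congrArg (· * (d : K)) (IsScalarTower.algebraMap_apply B S K x))
    rw [hφ]
    exact Ideal.mul_mem_right _ _ ((IsLocalization.AtPrime.to_map_mem_maximal_iff _ q _).2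
      ((q.mem_of_liesOver P x).1 hx))
  have hroot : Polynomial.aeval z (f.map φ) = 0 := by
    rw [Polynomial.aeval_def, Polynomial.eval₂_map]
    exact hf
  simpa using mem_range_or_inv_mem_range_of_isUnit_coeff hroot hunit

lemma height_eq_one_of_notMem_localizationIn {P : Ideal B} [P.IsPrime] (hP : P ≠ ⊥) {q : Ideal S}
    [q.IsPrime] [q.LiesOver P] {z : K}
    (hz : ∀ p ∈ P, ∃ a : S, algebraMap B K p * z = algebraMap S K a)
    (hzq : z ∉ localizationIn K q) : q.height = 1 := by
  have hz0 : z ≠ 0 := fun h ↦ hzq (h ▸ zero_mem _)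
  obtain ⟨s, hs, y, hy⟩ := mem_localizationIn.1
    ((mem_or_inv_mem_localizationIn hP hz).resolve_left hzq)
  refine le_antisymm (height_le_one_of_forall_dvd (B := B) (y := y) (n := 1)
    (by_contra fun hyq ↦ hzq ?_) hs fun p hp ↦ ?_) ?_
  · refine mem_localizationIn.2 ⟨y, hyq, s, ?_⟩
    rw [← hy, inv_mul_cancel_right₀ hz0]
  · rw [pow_one, ← q.over_def P] at hp
    obtain ⟨a, ha⟩ := hz p hp
    refine ⟨a, IsFractionRing.injective S K ?_⟩
    rw [map_mul, map_mul, ← hy, ← ha, ← IsScalarTower.algebraMap_apply]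
    field_simp
  · rw [Order.one_le_iff_ne_zero, ne_eq, Ideal.height_eq_zero_iff_eq_bot]
    rintro rfl
    have hinj : Function.Injective (algebraMap B S) := .of_comp (f := algebraMap S K) (by
      rw [← RingHom.coe_comp, ← IsScalarTower.algebraMap_eq]
      exact IsFractionRing.injective B K)
    exact hP ((⊥ : Ideal S).over_def P ▸ Ideal.comap_bot_of_injective _ hinj)

theorem exists_height_eq_one_notMem_localizationIn {z : K}
    (hz : ((1 : Submodule S K).restrictScalars B |>.colon {z}).IsPrime) :
    ∃ q : Ideal S, ∃ _ : q.IsPrime, q.height = 1 ∧ z ∉ localizationIn K q := by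
  let P : Ideal B := ((1 : Submodule S K).restrictScalars B).colon {z}
  have hPz : ∀ p ∈ P, ∃ a : S, algebraMap B K p * z = algebraMap S K a := fun p hp ↦ by
    obtain ⟨a, ha⟩ := Submodule.mem_one.1
      ((Submodule.restrictScalars_mem B _ _).1 (Submodule.mem_colon_singleton.1 hp))
    exact ⟨a, by rw [ha, Algebra.smul_def]⟩
  have hP : P ≠ ⊥ := by
    obtain ⟨⟨a, d⟩, hd⟩ := IsLocalization.surj (nonZeroDivisors B) z
    refine (Submodule.ne_bot_iff _).2 ⟨d, ?_, nonZeroDivisors.coe_ne_zero d⟩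
    refine Submodule.mem_colon_singleton.2 (Submodule.mem_one.2 ⟨algebraMap B S a, ?_⟩)
    rw [← IsScalarTower.algebraMap_apply, ← hd, Algebra.smul_def, mul_comm]
  obtain ⟨q, hJq, hq, hqP⟩ := Ideal.exists_ideal_over_prime_of_isIntegral P
    ((1 : Submodule S K).colon {z}) fun p hp ↦ by
      simpa [P, Submodule.mem_colon_singleton] using hp
  have : q.LiesOver P := ⟨hqP.symm⟩
  have hzq : z ∉ localizationIn K q := fun h ↦ by
    obtain ⟨s, hs, a, hsa⟩ := mem_localizationIn.1 h
    exact hs (hJq (Submodule.mem_colon_singleton.2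
      (Submodule.mem_one.2 ⟨a, by rw [← hsa, Algebra.smul_def]⟩)))
  exact ⟨q, hq, height_eq_one_of_notMem_localizationIn hP hPz hzq, hzq⟩

theorem exists_algebraMap_eq_of_forall_mem_localizationIn (B : Type*) {S K : Type*} [CommRing B]
    [IsDomain B] [IsNoetherianRing B] [CommRing S] [IsDomain S] [Algebra B S]
    [Algebra.IsIntegral B S] [Field K] [Algebra B K] [IsFractionRing B K] [Algebra S K]
    [IsScalarTower B S K] [IsFractionRing S K] [IsIntegrallyClosed S] {z : K}
    (hz : ∀ (q : Ideal S) [q.IsPrime], q.height = 1 → z ∈ localizationIn K q) :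
    ∃ a : S, algebraMap S K a = z := by
  by_contra hzS
  obtain ⟨b, hb⟩ := exists_isPrime_colon_smul (B := B)
    (N := (1 : Submodule S K).restrictScalars B) (z := z) (by simpa using hzS)
  obtain ⟨q, hq, hheight, hbz⟩ := exists_height_eq_one_notMem_localizationIn hb
  refine hbz ?_
  rw [Algebra.smul_def, IsScalarTower.algebraMap_apply B S K]
  exact mul_mem (algebraMap_mem _ _) (hz q hheight)

end IntersectionOfLocalizations

lemma isNoetherian_quotient_of_forall_eq_zero {B M Q : Type*} [Ring B] [AddCommGroup M] [Module B M]
    [AddCommGroup Q] [Module B Q] {N N' : Submodule B M} (f : N →ₗ[B] Q)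
    (hf : ∀ v, f v = 0 → (v : M) ∈ N') [IsNoetherian B (M ⧸ N)] [IsNoetherian B Q] :
    IsNoetherian B (M ⧸ N') := by
  have hle : LinearMap.ker f ≤ LinearMap.ker (N'.mkQ ∘ₗ N.subtype) := fun v hv ↦
    (Submodule.Quotient.mk_eq_zero _).2 (hf v hv)
  have : IsNoetherian B (N ⧸ LinearMap.ker f) := isNoetherian_of_linearEquiv
    f.quotKerEquivRange.symm
  have : IsNoetherian B (N.map N'.mkQ) := by
    have hrange : LinearMap.range ((LinearMap.ker f).liftQ _ hle) = N.map N'.mkQ := by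
      rw [Submodule.range_liftQ, LinearMap.range_comp, Submodule.range_subtype]
    rw [← hrange]
    infer_instance
  have hNle : N ≤ LinearMap.ker ((N.map N'.mkQ).mkQ ∘ₗ N'.mkQ) := fun v hv ↦
    (Submodule.Quotient.mk_eq_zero _).2 (Submodule.mem_map_of_mem hv)
  have : IsNoetherian B ((M ⧸ N') ⧸ N.map N'.mkQ) := by
    refine isNoetherian_of_surjective (N.liftQ _ hNle) ?_
    rw [Submodule.range_liftQ, LinearMap.range_eq_top]
    exact (Submodule.mkQ_surjective _).comp (Submodule.mkQ_surjective _)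
  exact (isNoetherian_iff_submodule_quotient (N.map N'.mkQ)).2 ⟨‹_›, ‹_›⟩

lemma exists_linearMap_algebraMap_eq_mul {S K : Type*} [CommRing S] [CommRing K] [Algebra S K]
    [FaithfulSMul S K] {I : Ideal S} {y : K}
    (h : ∀ a ∈ I, ∃ b, algebraMap S K b = y * algebraMap S K a) :
    ∃ φ : I →ₗ[S] S, ∀ a : I, algebraMap S K (φ a) = y * algebraMap S K a := by
  choose φ hφ using fun a : I ↦ h a a.2
  have hinj := FaithfulSMul.algebraMap_injective S K
  exact ⟨{ toFun := φ
           map_add' a b := hinj (by simp [hφ, mul_add])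
           map_smul' s a := hinj (by simp [hφ, mul_left_comm]) }, hφ⟩

section SymbolicPower

variable {S K : Type*} [CommRing S] [IsDomain S] [Field K] [Algebra S K] [IsFractionRing S K]

variable (K) in
/-- The symbolic power `q⁽ⁿ⁾ = qⁿ S_q ∩ S` of a prime ideal `q` of a domain `S` with fraction field
`K`. -/
def symbolicPower (q : Ideal S) [q.IsPrime] (n : ℕ) : Ideal S :=
  (maximalIdeal (localizationIn K q) ^ n).under S

variable {q : Ideal S} [q.IsPrime]

lemma mem_symbolicPower {n : ℕ} {g : S} (hg : g ≠ 0)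
    (hspan : maximalIdeal (localizationIn K q) ^ n = Ideal.span {algebraMap S _ g}) {a : S} :
    a ∈ symbolicPower K q n ↔ algebraMap S K a * (algebraMap S K g)⁻¹ ∈ localizationIn K q := by
  have hgK : algebraMap S K g ≠ 0 := (map_ne_zero_iff _ (IsFractionRing.injective S K)).2 hg
  rw [symbolicPower, Ideal.mem_comap, hspan, Ideal.mem_span_singleton]
  constructor
  · rintro ⟨w, hw⟩
    have hwK : algebraMap S K a = algebraMap S K g * w := congrArg Subtype.val hw
    rw [hwK, mul_comm (algebraMap S K g), mul_inv_cancel_right₀ hgK]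
    exact w.2
  · intro h
    exact ⟨⟨_, h⟩, Subtype.ext (by
      change algebraMap S K a = algebraMap S K g * _
      field_simp)⟩

lemma symbolicPower_one : symbolicPower K q 1 = q := by
  rw [symbolicPower, pow_one]
  exact IsLocalization.AtPrime.under_maximalIdeal _ q

lemma exists_maximalIdeal_localizationIn_eq_span [IsPrincipalIdealRing (localizationIn K q)] :
    ∃ f : S, maximalIdeal (localizationIn K q) = Ideal.span {algebraMap S _ f} := by
  obtain ⟨w, hw⟩ := IsPrincipalIdealRing.principal (maximalIdeal (localizationIn K q))
  obtain ⟨⟨f, s⟩, hf⟩ := IsLocalization.surj q.primeCompl w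
  refine ⟨f, hw.trans ?_⟩
  rw [← hf]
  exact (Ideal.span_singleton_mul_right_unit (IsLocalization.map_units _ s) w).symm

lemma exists_maximalIdeal_localizationIn_pow_eq_span
    [IsDiscreteValuationRing (localizationIn K q)] {g : S} (hg : g ≠ 0) :
    ∃ n, maximalIdeal (localizationIn K q) ^ n = Ideal.span {algebraMap S _ g} := by
  have hg' : algebraMap S (localizationIn K q) g ≠ 0 := fun h ↦
    hg (IsFractionRing.injective S K (by simpa using congrArg Subtype.val h))
  obtain ⟨n, hn⟩ := exists_maximalIdeal_pow_eq_of_principal (localizationIn K q)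
    (IsPrincipalIdealRing.principal _) (Ideal.span {algebraMap S _ g})
    (Ideal.span_singleton_eq_bot.not.2 hg')
  exact ⟨n, hn.symm⟩

end SymbolicPower

section HeightOnePrimes

variable {S K : Type*} [CommRing S] [IsDomain S] [Field K] [Algebra S K] [IsFractionRing S K]

lemma exists_notMem_mul_inv_mem_localizationIn {q q' : Ideal S} [q'.IsPrime]
    [IsDiscreteValuationRing (localizationIn K q')] (hle : ¬ q' ≤ q) [q.IsPrime] {g : S}
    (hg : g ≠ 0) :
    ∃ e ∉ q, algebraMap S K e * (algebraMap S K g)⁻¹ ∈ localizationIn K q' := by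
  obtain ⟨a, haq', haq⟩ := SetLike.not_le_iff_exists.1 hle
  obtain ⟨n, hn⟩ := exists_maximalIdeal_localizationIn_pow_eq_span (K := K) (q := q') hg
  refine ⟨a ^ n, fun h ↦ haq (Ideal.IsPrime.mem_of_pow_mem ‹_› _ h), (mem_symbolicPower hg hn).1 ?_⟩
  rw [symbolicPower, Ideal.mem_comap, map_pow]
  exact Ideal.pow_mem_pow ((IsLocalization.AtPrime.to_map_mem_maximal_iff _ q' a).2 haq') n

end HeightOnePrimes

section Marot

variable {B S K : Type*} [CommRing B] [IsDomain B] [IsNoetherianRing B] [CommRing S] [IsDomain S]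
  [Algebra B S] [Algebra.IsIntegral B S] [Field K] [Algebra B K] [IsFractionRing B K]
  [Algebra S K] [IsScalarTower B S K] [IsFractionRing S K] [IsIntegrallyClosed S]

variable (B) in
lemma exists_notMem_forall_mul_inv_mem_localizationIn (K : Type*) [Field K] [Algebra B K]
    [IsFractionRing B K] [Algebra S K] [IsScalarTower B S K] [IsFractionRing S K] {q : Ideal S}
    [q.IsPrime] (hq : q.height = 1) {g : S} (hg : g ≠ 0) :
    ∃ e ∉ q, ∀ (q' : Ideal S) [q'.IsPrime], q'.height = 1 → q' ≠ q →
      algebraMap S K e * (algebraMap S K g)⁻¹ ∈ localizationIn K q' := by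
  classical
  let T := (finite_setOf_height_eq_one_mem B K hg).toFinset.erase q
  have hsingle (q' : Ideal S) (hq'T : q' ∈ T) : ∃ e ∉ q, ∀ [q'.IsPrime],
      algebraMap S K e * (algebraMap S K g)⁻¹ ∈ localizationIn K q' := by
    obtain ⟨hne, hprime, hq', -⟩ : q' ≠ q ∧ q'.IsPrime ∧ q'.height = 1 ∧ g ∈ q' := by
      simpa [T] using hq'T
    have := isDiscreteValuationRing_localizationIn B (K := K) hq'
    have hle : ¬ q' ≤ q := fun hle ↦
      hne (eq_of_le_of_height_le_one hq.le (fun h ↦ by simp [h] at hq') hle)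
    exact (exists_notMem_mul_inv_mem_localizationIn hle hg).imp fun e he ↦ ⟨he.1, he.2⟩
  choose! e heq heT using hsingle
  refine ⟨∏ q' ∈ T, e q', fun h ↦ ?_, fun q' _ hq' hne ↦ ?_⟩
  · obtain ⟨q', hq'T, hmem⟩ := (Ideal.IsPrime.prod_mem_iff).1 h
    exact heq q' hq'T hmem
  by_cases hgq' : g ∈ q'
  · have hq'T : q' ∈ T := by simpa [T] using ⟨hne, ‹q'.IsPrime›, hq', hgq'⟩
    rw [← Finset.prod_erase_mul T e hq'T, map_mul, mul_assoc]
    exact mul_mem (algebraMap_mem (localizationIn K q') _) (heT q' hq'T)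
  · exact mul_mem (algebraMap_mem (localizationIn K q') _) (inv_mem_localizationIn hgq')

lemma exists_linearMap_symbolicPower (B : Type*) {S K : Type*} [CommRing B] [IsDomain B]
    [IsNoetherianRing B] [CommRing S] [IsDomain S] [Algebra B S] [Algebra.IsIntegral B S] [Field K]
    [Algebra B K] [IsFractionRing B K] [Algebra S K] [IsScalarTower B S K] [IsFractionRing S K]
    [IsIntegrallyClosed S] {q : Ideal S} [q.IsPrime] (hq : q.height = 1)
    {n : ℕ} {f : S} (hf : f ≠ 0)
    (hspan : maximalIdeal (localizationIn K q) = Ideal.span {algebraMap S _ f}) :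
    ∃ φ : symbolicPower K q n →ₗ[S] S, ∀ a, φ a ∈ q → (a : S) ∈ symbolicPower K q (n + 1) := by
  have hpow (k : ℕ) :
      maximalIdeal (localizationIn K q) ^ k = Ideal.span {algebraMap S _ (f ^ k)} := by
    rw [hspan, Ideal.span_singleton_pow, map_pow]
  have hfn (k : ℕ) : f ^ k ≠ 0 := pow_ne_zero k hf
  obtain ⟨e, heq, he⟩ := exists_notMem_forall_mul_inv_mem_localizationIn B K hq (hfn n)
  obtain ⟨φ, hφ⟩ := exists_linearMap_algebraMap_eq_mul (I := symbolicPower K q n)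
    (y := algebraMap S K e * (algebraMap S K (f ^ n))⁻¹) fun a ha ↦
      exists_algebraMap_eq_of_forall_mem_localizationIn B fun q' _ hq' ↦ by
    by_cases hne : q' = q
    · subst hne
      rw [mul_assoc, mul_comm (algebraMap S K (f ^ n))⁻¹]
      exact mul_mem (algebraMap_mem (localizationIn K q') e)
        ((mem_symbolicPower (hfn n) (hpow n)).1 ha)
    · exact mul_mem (he q' hq' hne) (algebraMap_mem (localizationIn K q') a)
  refine ⟨φ, fun a ha ↦ (mem_symbolicPower (hfn (n + 1)) (hpow (n + 1))).2
    (mem_localizationIn_of_mul heq ?_)⟩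
  have haf := (mem_symbolicPower (hfn 1) (hpow 1)).1 ((symbolicPower_one (K := K)).ge ha)
  rw [hφ] at haf
  convert haf using 1
  rw [pow_one, pow_succ, map_mul, mul_inv]
  ring

lemma isNoetherian_quotient_symbolicPower {q : Ideal S} [q.IsPrime] (hq : q.height = 1)
    [IsNoetherian B (S ⧸ q)] (n : ℕ) : IsNoetherian B (S ⧸ symbolicPower K q n) := by
  induction n with
  | zero =>
    have : Subsingleton (S ⧸ symbolicPower K q 0) := by
      rw [Ideal.Quotient.subsingleton_iff, symbolicPower, pow_zero, Ideal.one_eq_top]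
      exact Ideal.comap_top
    infer_instance
  | succ n ih =>
    have := isDiscreteValuationRing_localizationIn B (K := K) hq
    obtain ⟨f, hf⟩ := exists_maximalIdeal_localizationIn_eq_span (K := K) (q := q)
    have hf0 : f ≠ 0 := by
      rintro rfl
      exact IsDiscreteValuationRing.not_a_field (localizationIn K q) (by simpa using hf)
    obtain ⟨φ, hφ⟩ := exists_linearMap_symbolicPower B hq (n := n) hf0 hf
    have := isNoetherian_of_linearEquiv
      (Submodule.Quotient.restrictScalarsEquiv B (symbolicPower K q n)).symm
    have := isNoetherian_quotient_of_forall_eq_zero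
      (N := (symbolicPower K q n).restrictScalars B)
      (N' := (symbolicPower K q (n + 1)).restrictScalars B)
      ((Ideal.Quotient.mkₐ B q).toLinearMap ∘ₗ φ.restrictScalars B)
      fun a ha ↦ hφ a (Ideal.Quotient.eq_zero_iff_mem.1 ha)
    exact isNoetherian_of_linearEquiv
      (Submodule.Quotient.restrictScalarsEquiv B (symbolicPower K q (n + 1)))

theorem isNoetherian_quotient_span_singleton (K : Type*) [Field K] [Algebra B K]
    [IsFractionRing B K] [Algebra S K] [IsScalarTower B S K] [IsFractionRing S K] {x : S}
    (hx : x ≠ 0)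
    (h : ∀ (q : Ideal S) [q.IsPrime], q.height = 1 → x ∈ q → IsNoetherian B (S ⧸ q)) :
    IsNoetherian B (S ⧸ Ideal.span {x}) := by
  let T := {q : Ideal S | q.IsPrime ∧ q.height = 1 ∧ x ∈ q}
  have hTfin : Finite T := finite_setOf_height_eq_one_mem B K hx
  have hprime (q : T) : q.1.IsPrime := q.2.1
  have hdvr (q : T) := isDiscreteValuationRing_localizationIn B (K := K) q.2.2.1
  choose n hn using fun q : T ↦
    exists_maximalIdeal_localizationIn_pow_eq_span (K := K) (q := q.1) hx
  have hnoeth (q : T) : IsNoetherian B (S ⧸ symbolicPower K q.1 (n q)) :=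
    have := h q.1 q.2.2.1 q.2.2.2
    isNoetherian_quotient_symbolicPower q.2.2.1 _
  let f : S →ₗ[B] ∀ q : T, S ⧸ symbolicPower K q.1 (n q) :=
    LinearMap.pi fun q ↦ (Ideal.Quotient.mkₐ B _).toLinearMap
  have hf (a : S) (ha : f a = 0) : a ∈ Ideal.span {x} := by
    obtain ⟨b, hb⟩ := exists_algebraMap_eq_of_forall_mem_localizationIn B
        (z := algebraMap S K a * (algebraMap S K x)⁻¹) fun q _ hq ↦ by
      by_cases hxq : x ∈ q
      · let q' : T := ⟨q, ‹_›, hq, hxq⟩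
        exact (mem_symbolicPower hx (hn q')).1 (Ideal.Quotient.eq_zero_iff_mem.1 (congrFun ha q'))
      · exact mul_mem (algebraMap_mem (localizationIn K q) a) (inv_mem_localizationIn hxq)
    rw [eq_mul_inv_iff_mul_eq₀ ((map_ne_zero_iff _ (IsFractionRing.injective S K)).2 hx),
      ← map_mul] at hb
    exact Ideal.mem_span_singleton'.2 ⟨b, IsFractionRing.injective S K hb⟩
  have := isNoetherian_quotient_of_forall_eq_zero (N' := (Ideal.span {x}).restrictScalars B)
    (f ∘ₗ (⊤ : Submodule B S).subtype) fun a ha ↦ hf a ha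
  exact isNoetherian_of_linearEquiv (Submodule.Quotient.restrictScalarsEquiv B _)

variable (B) in
lemma eq_zero_of_forall_pow_dvd (K : Type*) [Field K] [Algebra B K] [IsFractionRing B K]
    [Algebra S K] [IsScalarTower B S K] [IsFractionRing S K] {x a : S} (hx : ¬ IsUnit x)
    (ha : ∀ n, x ^ n ∣ a) : a = 0 := by
  obtain rfl | hx0 := eq_or_ne x 0
  · simpa using ha 1
  have hxK : algebraMap S K x ≠ 0 := (map_ne_zero_iff _ (IsFractionRing.injective S K)).2 hx0
  obtain ⟨q, hqprime, hq, hxq⟩ : ∃ (q : Ideal S) (_ : q.IsPrime), q.height = 1 ∧ x ∈ q := by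
    by_contra! hnot
    obtain ⟨b, hb⟩ := exists_algebraMap_eq_of_forall_mem_localizationIn B
      (z := (algebraMap S K x)⁻¹) fun q _ hq ↦ inv_mem_localizationIn (hnot q ‹_› hq)
    refine hx (.of_mul_eq_one b (IsFractionRing.injective S K ?_))
    rw [map_mul, hb, mul_inv_cancel₀ hxK, map_one]
  have := isNoetherianRing_localizationIn_of_height_eq_one B (K := K) hq
  have hmem : algebraMap S (localizationIn K q) a ∈ ⨅ n, maximalIdeal (localizationIn K q) ^ n := by
    refine Ideal.mem_iInf.2 fun n ↦ ?_
    obtain ⟨c, rfl⟩ := ha n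
    rw [map_mul, map_pow]
    exact Ideal.mul_mem_right _ _ (Ideal.pow_mem_pow
      ((IsLocalization.AtPrime.to_map_mem_maximal_iff _ q x).2 hxq) n)
  rw [Ideal.iInf_pow_eq_bot_of_isLocalRing _ (IsLocalRing.maximalIdeal.isMaximal _).ne_top] at hmem
  exact IsFractionRing.injective S K (by simpa using congrArg Subtype.val hmem)

end Marot

lemma isPrecomplete_of_finite {R M : Type*} [CommRing R] (I : Ideal R) [IsPrecomplete I R]
    [AddCommGroup M] [Module R M] [Module.Finite R M] : IsPrecomplete I M := by
  refine AdicCompletion.of_surjective_iff.1 fun v ↦ ?_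
  obtain ⟨w, rfl⟩ := AdicCompletion.ofTensorProduct_surjective_of_finite I M v
  induction w using TensorProduct.induction_on with
  | zero => exact ⟨0, by simp⟩
  | tmul r m =>
    obtain ⟨r, rfl⟩ := AdicCompletion.of_surjective I R r
    exact ⟨r • m, by rw [AdicCompletion.ofTensorProduct_tmul, map_smul]; rfl⟩
  | add v w hv hw =>
    obtain ⟨a, ha⟩ := hv
    obtain ⟨b, hb⟩ := hw
    exact ⟨a + b, by rw [map_add, map_add, ha, hb]⟩

lemma finite_of_le_smul_top {R M : Type*} [CommRing R] {I : Ideal R} [IsPrecomplete I R]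
    [AddCommGroup M] [Module R M] [IsHausdorff I M] {N : Submodule R M} (hN : N ≤ I • ⊤)
    [Module.Finite R (M ⧸ N)] : Module.Finite R M := by
  obtain ⟨F, hF, hmap⟩ := exists_fg_map_eq_of_surjective N.mkQ_surjective
    (Module.Finite.fg_top (R := R))
  have := Module.Finite.iff_fg.2 hF
  have := isPrecomplete_of_finite I (M := F)
  refine .of_surjective F.subtype (surjective_of_mkQ_comp_surjective (I := I) fun v ↦ ?_)
  obtain ⟨v, rfl⟩ := Submodule.mkQ_surjective _ v
  obtain ⟨u, hu, huv⟩ : N.mkQ v ∈ F.map N.mkQ := hmap ▸ Submodule.mem_top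
  exact ⟨⟨u, hu⟩, (Submodule.Quotient.eq _).2 (hN ((Submodule.Quotient.eq _).1 huv))⟩

lemma mem_of_isHausdorff_quotient {R M : Type*} [CommRing R] {I : Ideal R} [AddCommGroup M]
    [Module R M] {N : Submodule R M} [IsHausdorff I (M ⧸ N)] {v : M}
    (hv : ∀ n, v ∈ (I ^ n • ⊤ : Submodule R M)) : v ∈ N := by
  refine (Submodule.Quotient.mk_eq_zero N).1 (IsHausdorff.haus ‹IsHausdorff I (M ⧸ N)› _ fun n ↦ ?_)
  have hmem := Submodule.mem_map_of_mem (f := N.mkQ) (hv n)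
  rw [Submodule.map_smul''] at hmem
  exact SModEq.zero.2 (Submodule.smul_mono le_rfl le_top hmem)

lemma not_isUnit_algebraMap_of_mem_maximalIdeal {A S : Type*} [CommRing A] [IsLocalRing A]
    [CommRing S] [Nontrivial S] [Algebra A S] [Algebra.IsIntegral A S] {x : A}
    (hx : x ∈ maximalIdeal A) : ¬ IsUnit (algebraMap A S x) := fun hu ↦ by
  obtain ⟨Q, hQmax, hQ⟩ := Ideal.exists_ideal_over_maximal_of_isIntegral (S := S) (maximalIdeal A)
    (le_maximalIdeal (RingHom.ker_ne_top _))
  have hxQ : x ∈ Q.comap (algebraMap A S) := hQ ▸ hx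
  exact hQmax.ne_top (Q.eq_top_of_isUnit_mem hxQ hu)

lemma finite_of_forall_finite_quotient {A : Type*} [CommRing A] [IsLocalRing A] [IsNoetherianRing A]
    [IsAdicComplete (maximalIdeal A) A] (B : Type*) {S : Type*} (K : Type*) [CommRing B]
    [IsDomain B] [Algebra A B] [Module.Finite A B]
    [CommRing S] [IsDomain S] [Algebra B S] [Algebra A S] [IsScalarTower A B S]
    [Algebra.IsIntegral B S] [Field K] [Algebra B K] [IsFractionRing B K] [Algebra S K]
    [IsScalarTower B S K] [IsFractionRing S K] [IsIntegrallyClosed S]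
    {x : A} (hx : x ∈ maximalIdeal A) (hx0 : algebraMap A S x ≠ 0)
    (h : ∀ (q : Ideal S) [q.IsPrime], q.height = 1 → algebraMap A S x ∈ q →
      Module.Finite A (S ⧸ q)) : Module.Finite A S := by
  have := IsNoetherianRing.of_finite A B
  have := Algebra.IsIntegral.of_finite A B
  have : Algebra.IsIntegral A S := Algebra.IsIntegral.trans B
  let N (k : ℕ) : Submodule A S := (Ideal.span {algebraMap A S x ^ k}).restrictScalars A
  have hfin (k : ℕ) : Module.Finite A (S ⧸ N k) := by
    have : IsNoetherian B (S ⧸ Ideal.span {algebraMap A S x ^ k}) :=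
      isNoetherian_quotient_span_singleton K (pow_ne_zero k hx0) fun q hqprime hq hxq ↦
        have := h q hq (hqprime.mem_of_pow_mem k hxq)
        isNoetherian_of_tower A inferInstance
    have : Module.Finite A (S ⧸ Ideal.span {algebraMap A S x ^ k}) := Module.Finite.trans B _
    exact .equiv (Submodule.Quotient.restrictScalarsEquiv A _).symm
  have : IsHausdorff (maximalIdeal A) S := ⟨fun v hv ↦
    eq_zero_of_forall_pow_dvd B K (not_isUnit_algebraMap_of_mem_maximalIdeal hx) fun k ↦
      Ideal.mem_span_singleton.1
        (mem_of_isHausdorff_quotient (N := N k) fun n ↦ SModEq.zero.1 (hv n))⟩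
  refine finite_of_le_smul_top (I := maximalIdeal A) (N := N 1) fun v hv ↦ ?_
  obtain ⟨c, rfl⟩ := Ideal.mem_span_singleton.1 hv
  rw [pow_one, ← Algebra.smul_def]
  exact Submodule.smul_mem_smul hx Submodule.mem_top

lemma isFractionRing_subalgebra {A E L : Type*} [CommRing A] [CommRing E] [IsDomain E]
    [Algebra A E] [Field L] [Algebra E L] [IsFractionRing E L] {D : Subalgebra A E}
    (hD : ∀ y, ∃ s ∈ D, s ≠ 0 ∧ s * y ∈ D) : IsFractionRing D L := by
  have hinj := IsFractionRing.injective E L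
  have : FaithfulSMul D L := (faithfulSMul_iff_algebraMap_injective D L).2
    (hinj.comp Subtype.val_injective)
  refine IsFractionRing.of_field D L fun z ↦ ?_
  obtain ⟨a, b, -, rfl⟩ := IsFractionRing.div_surjective (A := E) z
  obtain ⟨s, hsD, hs0, hsa⟩ := hD a
  obtain ⟨t, htD, ht0, htb⟩ := hD b
  refine ⟨⟨t * (s * a), mul_mem htD hsa⟩, ⟨s * (t * b), mul_mem hsD htb⟩, ?_⟩
  change algebraMap E L a / algebraMap E L b =
    algebraMap E L (t * (s * a)) / algebraMap E L (s * (t * b))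
  have hs : algebraMap E L s ≠ 0 := (map_ne_zero_iff _ hinj).2 hs0
  have ht : algebraMap E L t ≠ 0 := (map_ne_zero_iff _ hinj).2 ht0
  simp only [map_mul]
  field_simp

lemma finite_of_finite_integralClosure_subalgebra {A E : Type*} [CommRing A]
    [IsNoetherianRing A] [CommRing E] [IsDomain E] [Algebra A E] [Algebra.IsIntegral A E]
    {D : Subalgebra A E} [Module.Finite A (integralClosure D (FractionRing E))] :
    Module.Finite A E := by
  have : Algebra.IsIntegral D E := Algebra.IsIntegral.tower_top A
  let φ : E →ₐ[D] integralClosure D (FractionRing E) :=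
    (IsScalarTower.toAlgHom D E (FractionRing E)).codRestrict _ fun y ↦
      (Algebra.IsIntegral.isIntegral y).map _
  have hφ : Function.Injective φ := fun a b hab ↦
    IsFractionRing.injective E (FractionRing E) (congrArg Subtype.val hab)
  exact Module.Finite.of_injective (φ.restrictScalars A).toLinearMap hφ

lemma finite_integralClosure_of_maximalIdeal_le_ker {A B K : Type*} [CommRing A] [IsLocalRing A]
    [CommRing B] [IsDomain B] [Algebra A B] [Module.Finite A B] [Field K] [Algebra B K]
    [IsFractionRing B K] [Algebra A K] [IsScalarTower A B K]
    (h : maximalIdeal A ≤ RingHom.ker (algebraMap A B)) :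
    Module.Finite A (integralClosure B K) := by
  have := Algebra.IsIntegral.of_finite A B
  have hker : RingHom.ker (algebraMap A B) = maximalIdeal A :=
    ((maximalIdeal.isMaximal A).eq_of_le (RingHom.ker_ne_top _) h).symm
  have hmax : (⊥ : Ideal B).IsMaximal := by
    refine Ideal.isMaximal_of_isIntegral_of_isMaximal_comap (R := A) _ ?_
    rw [← RingHom.ker_eq_comap_bot, hker]
    exact maximalIdeal.isMaximal A
  have hfield : IsField B := by
    by_contra hnot
    exact Ring.ne_bot_of_isMaximal_of_not_isField hmax hnot rfl
  refine .of_surjective ((Algebra.linearMap B (integralClosure B K)).restrictScalars A) ?_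
  rintro ⟨y, hy⟩
  obtain ⟨b, rfl⟩ := IsFractionRing.surjective_iff_isField.2 hfield y
  exact ⟨b, rfl⟩

lemma exists_finite_subalgebra_quotient_forall_mul_mem {A : Type*} (B : Type*) {S : Type*}
    (K : Type*) [CommRing A] [CommRing B] [IsDomain B] [IsNoetherianRing B] [Algebra A B]
    [Module.Finite A B] [CommRing S] [IsDomain S] [Algebra B S] [Algebra A S] [IsScalarTower A B S]
    [Algebra.IsIntegral B S] [Field K] [Algebra B K] [IsFractionRing B K] [Algebra S K]
    [IsScalarTower B S K] [IsFractionRing S K] {q : Ideal S} [q.IsPrime] (hq : q.height = 1) :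
    ∃ D : Subalgebra A (S ⧸ q), Module.Finite A D ∧ ∀ y, ∃ s ∈ D, s ≠ 0 ∧ s * y ∈ D := by
  obtain ⟨D, hDfin, hD⟩ := exists_finite_subalgebra_forall_mul_sub_mem (B := B) K hq
  have hDfin' : Module.Finite A D := Module.Finite.trans B D
  have : Module.Finite A (D.restrictScalars A).toSubmodule := hDfin'
  refine ⟨(D.restrictScalars A).map (Ideal.Quotient.mkₐ A q), ?_, fun y ↦ ?_⟩
  · exact Module.Finite.map (D.restrictScalars A).toSubmodule (Ideal.Quotient.mkₐ A q).toLinearMap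
  · obtain ⟨y, rfl⟩ := Ideal.Quotient.mk_surjective y
    obtain ⟨t, ht, d, hdD, hd⟩ := hD y
    refine ⟨Ideal.Quotient.mk q (algebraMap B S t), ⟨_, D.algebraMap_mem t, rfl⟩,
      fun h ↦ ht (Ideal.Quotient.eq_zero_iff_mem (I := q).1 h), d, hdD, ?_⟩
    rw [← map_mul]
    exact ((Ideal.Quotient.mk_eq_mk_iff_sub_mem _ _).2 hd).symm

lemma ker_algebraMap_lt_ker_algebraMap_quotient {A S : Type*} [CommRing A] [CommRing S]
    [IsDomain S] [Algebra A S] [Algebra.IsIntegral A S] {q : Ideal S} (hq : q ≠ ⊥) :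
    RingHom.ker (algebraMap A S) < RingHom.ker (algebraMap A (S ⧸ q)) := by
  obtain ⟨y, hyq, hy0⟩ := Submodule.exists_mem_ne_zero_of_ne_bot hq
  have hlt := Ideal.comap_lt_comap_of_integral_mem_sdiff (R := A) (I := ⊥) (J := q) bot_le
    ⟨hyq, hy0⟩ (Algebra.IsIntegral.isIntegral y)
  rwa [← RingHom.ker_eq_comap_bot, ← Ideal.mk_ker (I := q), RingHom.comap_ker] at hlt

universe u in
theorem finite_integralClosure_of_isAdicComplete {A : Type*} [CommRing A] [IsLocalRing A]
    [IsNoetherianRing A] [IsAdicComplete (maximalIdeal A) A] (B K : Type u) [CommRing B]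
    [IsDomain B] [Algebra A B] [Module.Finite A B] [Field K] [Algebra B K] [IsFractionRing B K]
    [Algebra A K] [IsScalarTower A B K] : Module.Finite A (integralClosure B K) := by
  induction hP : RingHom.ker (algebraMap A B) using WellFoundedGT.induction generalizing B K with
  | ind P ih =>
  subst hP
  by_cases hle : maximalIdeal A ≤ RingHom.ker (algebraMap A B)
  · exact finite_integralClosure_of_maximalIdeal_le_ker hle
  obtain ⟨x, hx, hx0⟩ := SetLike.not_le_iff_exists.1 hle
  have hAB := Algebra.IsIntegral.of_finite A B
  have : IsNoetherianRing B := IsNoetherianRing.of_finite A B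
  have : IsFractionRing (integralClosure B K) K :=
    integralClosure.isFractionRing_of_finite_extension K K
  have : IsIntegrallyClosed (integralClosure B K) :=
    integralClosure.isIntegrallyClosedOfFiniteExtension K
  have : Algebra.IsIntegral A (integralClosure B K) := Algebra.IsIntegral.trans B
  have hinj : Function.Injective (algebraMap B (integralClosure B K)) :=
    FaithfulSMul.algebraMap_injective _ _
  refine finite_of_forall_finite_quotient B K hx ?_ fun q _ hq _ ↦ ?_
  · rw [IsScalarTower.algebraMap_apply A B]
    exact (map_ne_zero_iff _ hinj).2 hx0
  obtain ⟨D, hDfin, hD⟩ := exists_finite_subalgebra_quotient_forall_mul_mem (A := A) B K hq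
  have := isFractionRing_subalgebra (L := FractionRing (integralClosure B K ⧸ q)) hD
  have hlt : RingHom.ker (algebraMap A B) < RingHom.ker (algebraMap A D) := by
    have hlt := ker_algebraMap_lt_ker_algebraMap_quotient (A := A) (q := q) (by
      rintro rfl
      simp at hq)
    rwa [IsScalarTower.algebraMap_eq A B, RingHom.ker_comp_of_injective _ hinj,
      IsScalarTower.algebraMap_eq A D (_ ⧸ q),
      RingHom.ker_comp_of_injective _ Subtype.val_injective] at hlt
  have := ih _ hlt D (FractionRing (integralClosure B K ⧸ q)) rfl
  exact finite_of_finite_integralClosure_subalgebra (D := D)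

section Completion

variable {T R : Type*} [CommRing T] [CommRing R] {V : Ideal T} {I : Ideal R}

lemma pow_le_comap_pow_of_map_le {g : T →+* R} (hg : V.map g ≤ I) (n : ℕ) :
    V ^ n ≤ (I ^ n).comap g := by
  rw [← Ideal.map_le_iff_le_comap, Ideal.map_pow]
  exact Ideal.pow_right_mono hg n

lemma factorPow_comp_quotientMap_comp_evalₐ {g : T →+* R} (hg : V.map g ≤ I) {m n : ℕ}
    (hmn : m ≤ n) :
    (Ideal.Quotient.factorPow I hmn).comp
        ((Ideal.quotientMap (I ^ n) g (pow_le_comap_pow_of_map_le hg n)).comp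
          (AdicCompletion.evalₐ V n : AdicCompletion V T →+* T ⧸ V ^ n)) =
      (Ideal.quotientMap (I ^ m) g (pow_le_comap_pow_of_map_le hg m)).comp
        (AdicCompletion.evalₐ V m : AdicCompletion V T →+* T ⧸ V ^ m) := by
  ext x
  obtain ⟨x, rfl⟩ := AdicCompletion.mk_surjective V T x
  simp only [RingHom.comp_apply, RingHom.coe_coe, AdicCompletion.evalₐ_mk, Ideal.quotientMap_mk,
    Ideal.Quotient.factor_mk]
  rw [Ideal.Quotient.mk_eq_mk_iff_sub_mem, ← map_sub]
  exact pow_le_comap_pow_of_map_le hg m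
    (Ideal.Quotient.mk_eq_mk_iff_sub_mem _ _ |>.1 (AdicCompletion.Ideal.mk_eq_mk V hmn x))

/-- The ring homomorphism `lim T / Vⁿ → lim R / Iⁿ` induced by a ring homomorphism `g : T → R`
with `g(V) ⊆ I`. -/
def adicCompletionMap (g : T →+* R) (hg : V.map g ≤ I) :
    AdicCompletion V T →+* AdicCompletion I R :=
  AdicCompletion.liftRingHom I _ fun hmn ↦ factorPow_comp_quotientMap_comp_evalₐ hg hmn

lemma adicCompletionMap_algebraMap {g : T →+* R} (hg : V.map g ≤ I) (t : T) :
    adicCompletionMap g hg (algebraMap T _ t) = algebraMap R _ (g t) := by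
  refine AdicCompletion.ext_evalₐ fun n ↦ ?_
  rw [adicCompletionMap, AdicCompletion.evalₐ_liftRingHom, RingHom.comp_apply, RingHom.coe_coe,
    AlgHom.commutes, AlgHom.commutes]
  rfl

lemma map_adicCompletionMap {g : T →+* R} (hg : V.map g = I) :
    (V.map (algebraMap T (AdicCompletion V T))).map (adicCompletionMap g hg.le) =
      I.map (algebraMap R (AdicCompletion I R)) := by
  have hcomm : (adicCompletionMap g hg.le).comp (algebraMap T (AdicCompletion V T)) =
      (algebraMap R (AdicCompletion I R)).comp g :=
    RingHom.ext (adicCompletionMap_algebraMap hg.le)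
  rw [Ideal.map_map, hcomm, ← Ideal.map_map, hg]

lemma exists_sub_algebraMap_mem_map (hI : I.FG) (y : AdicCompletion I R) :
    ∃ r : R, y - algebraMap R _ r ∈ I.map (algebraMap R (AdicCompletion I R)) := by
  obtain ⟨r, hr⟩ := Ideal.Quotient.mk_surjective (AdicCompletion.evalOneₐ I y)
  refine ⟨r, ?_⟩
  rw [← AdicCompletion.ker_evalOneₐ_eq_map _ hI, RingHom.mem_ker, map_sub, sub_eq_zero]
  exact hr.symm.trans (AlgHom.commutes (AdicCompletion.evalOneₐ I) r).symm

lemma adicCompletionMap_surjective {g : T →+* R} (hg : V.map g = I) (hV : V.FG)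
    (hsurj : Function.Surjective g) : Function.Surjective (adicCompletionMap g hg.le) := by
  have hI : I.FG := hg ▸ hV.map g
  have := AdicCompletion.isAdicComplete_self V hV
  have : IsHausdorff ((V.map (algebraMap T (AdicCompletion V T))).map
      (adicCompletionMap g hg.le)) (AdicCompletion I R) := by
    rw [map_adicCompletionMap hg]
    exact (AdicCompletion.isAdicComplete_self I hI).toIsHausdorff
  refine surjective_of_mk_map_comp_surjective (I := V.map (algebraMap T (AdicCompletion V T)))
    _ fun y ↦ ?_
  obtain ⟨y, rfl⟩ := Ideal.Quotient.mk_surjective y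
  obtain ⟨r, hr⟩ := exists_sub_algebraMap_mem_map hI y
  obtain ⟨t, rfl⟩ := hsurj r
  refine ⟨algebraMap T _ t, ?_⟩
  rw [RingHom.comp_apply, adicCompletionMap_algebraMap, eq_comm,
    Ideal.Quotient.mk_eq_mk_iff_sub_mem, map_adicCompletionMap hg]
  exact hr

/- For `I = (a₁, …, aᵣ)` the substitution `Xᵢ ↦ aᵢ` makes the completion a quotient of
`R⟦X₁, …, Xᵣ⟧`. -/
theorem isNoetherianRing_adicCompletion [IsNoetherianRing R] (I : Ideal R) :
    IsNoetherianRing (AdicCompletion I R) := by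
  obtain ⟨r, a, rfl⟩ := Submodule.fg_iff_exists_fin_generating_family.1 I.fg_of_isNoetherianRing
  have hmap : (MvPolynomial.idealOfVars (Fin r) R).map (MvPolynomial.aeval (R := R) a).toRingHom =
      Submodule.span R (Set.range a) := by
    rw [MvPolynomial.idealOfVars, Ideal.map_span, ← Set.range_comp]
    congr 2
    exact funext (MvPolynomial.aeval_X a)
  have : IsNoetherianRing (AdicCompletion (MvPolynomial.idealOfVars (Fin r) R)
      (MvPolynomial (Fin r) R)) :=
    isNoetherianRing_of_ringEquiv (MvPowerSeries (Fin r) R)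
      (MvPowerSeries.toAdicCompletionAlgEquiv (Fin r) R).toRingEquiv
  exact isNoetherianRing_of_surjective _ _ _ (adicCompletionMap_surjective hmap
    (MvPolynomial.idealOfVars_fg _ _) fun c ↦ ⟨MvPolynomial.C c, MvPolynomial.aeval_C a c⟩)

end Completion

section Descent

variable {C : Type*} [CommRing C]

lemma eq_zero_of_forall_mk_minimalPrimes_eq_zero [IsReduced C] {c : C}
    (hc : ∀ p ∈ minimalPrimes C, Ideal.Quotient.mk p c = 0) : c = 0 := by
  have hmem : c ∈ sInf (minimalPrimes C) :=
    Ideal.mem_sInf.2 fun {p} hp ↦ Ideal.Quotient.eq_zero_iff_mem.1 (hc p hp)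
  have hbot : sInf (minimalPrimes C) = ⊥ :=
    (Ideal.sInf_minimalPrimes (I := (⊥ : Ideal C))).trans (nilradical_eq_zero C)
  rwa [hbot] at hmem

lemma finite_integralClosure_of_injective [IsNoetherianRing C] {L L' : Type*} [CommRing L]
    [CommRing L'] [Algebra C L] [Algebra C L'] [Module.Finite C (integralClosure C L')]
    {f : L →ₐ[C] L'} (hf : Function.Injective f) : Module.Finite C (integralClosure C L) :=
  .of_injective f.mapIntegralClosure.toLinearMap fun _ _ hxy ↦
    Subtype.ext (hf (congrArg Subtype.val hxy))

lemma finite_integralClosure_pi [IsNoetherianRing C] {ι : Type*} [Finite ι] (L : ι → Type*)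
    [∀ i, CommRing (L i)] [∀ i, Algebra C (L i)]
    [∀ i, Module.Finite C (integralClosure C (L i))] :
    Module.Finite C (integralClosure C (∀ i, L i)) :=
  .of_injective (LinearMap.pi fun i ↦ (Pi.evalAlgHom C L i).mapIntegralClosure.toLinearMap)
    fun _ _ hxy ↦ Subtype.ext (funext fun i ↦ congrArg Subtype.val (congrFun hxy i))

lemma finite_integralClosure_of_tower [IsNoetherianRing C] (B : Type*) {L : Type*} [CommRing B]
    [CommRing L] [Algebra C B] [Algebra B L] [Algebra C L] [IsScalarTower C B L]
    [Module.Finite C (integralClosure B L)] : Module.Finite C (integralClosure C L) := by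
  let f : integralClosure C L →ₗ[C] integralClosure B L :=
    { toFun x := ⟨x.1, IsIntegral.tower_top x.2⟩
      map_add' _ _ := rfl
      map_smul' _ _ := rfl }
  exact .of_injective f fun _ _ hxy ↦ Subtype.ext (Subtype.mk.inj hxy)

variable {M : Submonoid C} (C' : Type*) [CommRing C'] [Algebra C C'] [IsLocalization M C']

lemma exists_injective_algHom_pi_fractionRing_quotient_minimalPrimes [IsReduced C]
    (hM : M ≤ nonZeroDivisors C) :
    ∃ f : C' →ₐ[C] ∀ p : minimalPrimes C, FractionRing (C ⧸ p.1), Function.Injective f := by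
  have hker {c : C} {p : Ideal C} (hc : algebraMap C (FractionRing (C ⧸ p)) c = 0) :
      Ideal.Quotient.mk p c = 0 := by
    rw [IsScalarTower.algebraMap_apply C (C ⧸ p)] at hc
    exact (FaithfulSMul.algebraMap_eq_zero_iff _ _).1 hc
  have hunit (y : M) : IsUnit
      (Algebra.ofId C (∀ p : minimalPrimes C, FractionRing (C ⧸ p.1)) y) := by
    refine Pi.isUnit_iff.2 fun p ↦ ?_
    have := Ideal.IsMinimalPrime.isPrime p.2
    exact IsUnit.mk0 _ fun hy ↦
      Set.disjoint_left.1 (Ideal.disjoint_nonZeroDivisors_of_mem_minimalPrimes p.2)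
        (Ideal.Quotient.eq_zero_iff_mem.1 (hker hy)) (hM y.2)
  refine ⟨IsLocalization.liftAlgHom (S := C') hunit,
    IsLocalization.injective_of_map_algebraMap_zero (M := M) C' _ fun c hc ↦ ?_⟩
  have hc : algebraMap C (∀ p : minimalPrimes C, FractionRing (C ⧸ p.1)) c = 0 := by
    simpa using hc
  rw [eq_zero_of_forall_mk_minimalPrimes_eq_zero fun p hp ↦ hker (congrFun hc ⟨p, hp⟩), map_zero]

theorem finite_integralClosure_localization_of_quotient_minimalPrimes [IsReduced C]
    [IsNoetherianRing C] (hM : M ≤ nonZeroDivisors C) (h : ∀ p ∈ minimalPrimes C, Module.Finite C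
      (integralClosure (C ⧸ p) (FractionRing (C ⧸ p)))) :
    Module.Finite C (integralClosure C C') := by
  obtain ⟨f, hf⟩ := exists_injective_algHom_pi_fractionRing_quotient_minimalPrimes C' hM
  have : Finite (minimalPrimes C) := (minimalPrimes.finite_of_isNoetherianRing C).to_subtype
  have (p : minimalPrimes C) : Module.Finite C (integralClosure C (FractionRing (C ⧸ p.1))) :=
    have := h p p.2
    finite_integralClosure_of_tower (C ⧸ p.1)
  have := finite_integralClosure_pi (C := C) fun p : minimalPrimes C ↦ FractionRing (C ⧸ p.1)
  exact finite_integralClosure_of_injective hf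

open TensorProduct in
theorem finite_integralClosure_of_faithfullyFlat {R : Type*} [CommRing R] [Algebra R C]
    [Module.FaithfullyFlat R C] [IsReduced C] [IsNoetherianRing C]
    (h : ∀ p ∈ minimalPrimes C, Module.Finite C
      (integralClosure (C ⧸ p) (FractionRing (C ⧸ p)))) (K : Type*) [CommRing K] [Algebra R K]
    [IsFractionRing R K] : Module.Finite R (integralClosure R K) := by
  have hM : Algebra.algebraMapSubmonoid C (nonZeroDivisors R) ≤ nonZeroDivisors C := by
    rintro _ ⟨x, hx, rfl⟩
    refine mem_nonZeroDivisors_iff_right.2 fun c hc ↦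
      Module.Flat.isSMulRegular_of_nonZeroDivisors (M := C) hx ?_
    simp only [Algebra.smul_def, mul_comm _ c, hc, mul_zero]
  have := finite_integralClosure_localization_of_quotient_minimalPrimes (C ⊗[R] K) hM h
  have : Module.Finite C (C ⊗[R] integralClosure R K) :=
    .of_injective (TensorProduct.toIntegralClosure R C K).toLinearMap
      TensorProduct.toIntegralClosure_injective_of_flat
  exact .of_finite_tensorProduct_of_faithfullyFlat C

end Descent

section LinearAbelian

open Abelian Limits

variable {R : Type*} [CommRing R] {C : Type*} [Category C] [Abelian C] [HasExt C] {K Q M : C}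

lemma surjective_mk₀_comp_of_mono {n : ℕ} (φ : K ⟶ Q) [Mono φ]
    [Subsingleton (Ext (cokernel φ) M (n + 1))] :
    Function.Surjective fun e : Ext Q M n ↦ (Ext.mk₀ φ).comp e (zero_add n) := fun e ↦
  Ext.contravariant_sequence_exact₁
    (S := ShortComplex.mk φ (cokernel.π φ) (cokernel.condition φ))
    { exact := ShortComplex.exact_cokernel φ } M e (add_comm 1 n) (Subsingleton.elim _ _)

lemma eq_zero_of_mk₀_comp_eq_zero_of_epi (π : Q ⟶ K) [Epi π]
    (hker : ∀ f : kernel π ⟶ M, f = 0) (e : Ext K M 1)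
    (he : (Ext.mk₀ π).comp e (zero_add 1) = 0) : e = 0 := by
  obtain ⟨z, rfl⟩ := Ext.contravariant_sequence_exact₃
    (S := ShortComplex.mk (kernel.ι π) π (kernel.condition π))
    { exact := ShortComplex.exact_kernel π } M e he (n₀ := 0) rfl
  obtain ⟨f, rfl⟩ := Ext.addEquiv₀.symm.surjective z
  rw [hker f, map_zero, Ext.comp_zero]

lemma subsingleton_ext_of_iso (i : K ≅ Q) {n : ℕ} [Subsingleton (Ext K M n)] :
    Subsingleton (Ext Q M n) := by
  refine subsingleton_of_forall_eq 0 fun e ↦ ?_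
  rw [← Ext.mk₀_id_comp e, ← i.inv_hom_id, ← Ext.mk₀_comp_mk₀_assoc,
    Subsingleton.elim ((Ext.mk₀ i.hom).comp e (zero_add n)) 0, Ext.comp_zero]

variable [Linear R C]

lemma smul_ext_eq_mk₀_comp {n : ℕ} (r : R) (e : Ext K M n) :
    r • e = (Ext.mk₀ (r • 𝟙 K)).comp e (zero_add n) := by
  rw [Ext.mk₀_smul, Ext.smul_comp, Ext.mk₀_id_comp]

-- The composite `Q ⟶ K ⟶ Q` acts on `Ext¹(Q, M)` as `a`, hence as `x • U`, hence as zero; but it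
-- factors as the surjection `φ^*` followed by the injection `π^*`.
lemma subsingleton_ext_one_of_comp_eq_smul_id {x a : R} {φ : K ⟶ Q} [Mono φ] {π : Q ⟶ K} [Epi π]
    (hπφ : π ≫ φ = a • 𝟙 Q) (hxQ : x • 𝟙 Q = 0) (hxM : Mono (x • 𝟙 M)) {U : M ⟶ M}
    (hU : a • 𝟙 M = x • U) [Subsingleton (Ext (cokernel φ) M 2)] : Subsingleton (Ext K M 1) := by
  have hker (f : kernel π ⟶ M) : f = 0 := by
    have hxker : x • 𝟙 (kernel π) = 0 := by
      rw [← cancel_mono (kernel.ι π), Linear.smul_comp, Category.id_comp, zero_comp,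
        ← Category.comp_id (kernel.ι π), ← Linear.comp_smul, hxQ, comp_zero]
    rw [← cancel_mono (x • 𝟙 M), zero_comp, Linear.comp_smul, Category.comp_id,
      ← Category.id_comp f, ← Linear.smul_comp, hxker, zero_comp]
  refine subsingleton_of_forall_eq 0 fun e ↦ ?_
  obtain ⟨e', rfl⟩ := surjective_mk₀_comp_of_mono φ e
  refine eq_zero_of_mk₀_comp_eq_zero_of_epi π hker _ ?_
  rw [Ext.mk₀_comp_mk₀_assoc, hπφ, ← smul_ext_eq_mk₀_comp, Ext.smul_eq_comp_mk₀, hU,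
    Ext.mk₀_smul, Ext.comp_smul, smul_ext_eq_mk₀_comp, hxQ, Ext.mk₀_zero, Ext.zero_comp]

end LinearAbelian

section InjectiveDimension

open Abelian Limits Pointwise

universe u

variable {R : Type u} [CommRing R]

lemma exists_mono_epi_quotient_quotSMulTop {I : Ideal R} {x a : R} (h : ∀ r, r ∈ I ↔ x ∣ a * r) :
    ∃ (φ : ModuleCat.of R (R ⧸ I) ⟶ ModuleCat.of R (QuotSMulTop x R))
      (π : ModuleCat.of R (QuotSMulTop x R) ⟶ ModuleCat.of R (R ⧸ I)),
      Mono φ ∧ Epi π ∧ π ≫ φ = a • 𝟙 _ := by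
  have hmem (r : R) : r ∈ x • (⊤ : Submodule R R) ↔ x ∣ r := by
    simp only [Submodule.mem_smul_pointwise_iff_exists, Submodule.mem_top, true_and,
      smul_eq_mul, dvd_def, eq_comm]
  have hφ : I = (x • (⊤ : Submodule R R)).comap (LinearMap.lsmul R R a) := by
    ext r
    rw [h, Submodule.mem_comap, hmem]
    rfl
  have hπ : x • (⊤ : Submodule R R) ≤ I := fun r hr ↦ (h r).2 (((hmem r).1 hr).mul_left a)
  refine ⟨ModuleCat.ofHom (Submodule.mapQ I _ (LinearMap.lsmul R R a) hφ.le),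
    ModuleCat.ofHom (Submodule.factor hπ), ?_, ?_, ?_⟩
  · rw [ModuleCat.mono_iff_injective, ← LinearMap.ker_eq_bot]
    exact Submodule.ker_liftQ_eq_bot _ _ _ (by rw [LinearMap.ker_comp, Submodule.ker_mkQ, ← hφ])
  · rw [ModuleCat.epi_iff_surjective]
    exact Submodule.factor_surjective hπ
  · ext
    rfl

lemma smul_id_quotSMulTop (x : R) : x • 𝟙 (ModuleCat.of R (QuotSMulTop x R)) = 0 := by
  ext
  exact (Submodule.Quotient.mk_eq_zero _).2
    (Submodule.smul_mem_pointwise_smul _ _ ⊤ Submodule.mem_top)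

lemma hasProjectiveDimensionLT_two_quotSMulTop {x : R} (hx : IsSMulRegular R x) :
    HasProjectiveDimensionLT (ModuleCat.of R (QuotSMulTop x R)) 2 := by
  have hS := IsSMulRegular.smulShortComplex_shortExact (M := ModuleCat.of R R) hx
  have hfree : HasProjectiveDimensionLT (ModuleCat.of R R) 1 := inferInstance
  exact hS.hasProjectiveDimensionLT_X₃ 1 hfree
    (hasProjectiveDimensionLT_of_ge (ModuleCat.of R R) 1 2 one_le_two)

lemma subsingleton_ext_of_mono_quotSMulTop {N M : ModuleCat.{u} R} {x : R}
    (hx : IsSMulRegular R x) (φ : N ⟶ ModuleCat.of R (QuotSMulTop x R)) [Mono φ] {n : ℕ}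
    (hn : 2 ≤ n) [Subsingleton (Ext (cokernel φ) M (n + 1))] : Subsingleton (Ext N M n) := by
  have := hasProjectiveDimensionLT_two_quotSMulTop hx
  have := HasProjectiveDimensionLT.subsingleton (ModuleCat.of R (QuotSMulTop x R)) 2 n hn M
  exact (surjective_mk₀_comp_of_mono φ).subsingleton

lemma subsingleton_ext_quotient {M : ModuleCat.{u} R} {I : Ideal R} {x a : R} {U : M ⟶ M}
    (hx : IsSMulRegular R x) (hxM : IsSMulRegular M x) (ha : ∀ r, r ∈ I ↔ x ∣ a * r)
    (hU : a • 𝟙 M = x • U) {n : ℕ}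
    (hsucc : ∀ N : ModuleCat.{u} R, Module.Finite R N → Subsingleton (Ext N M (n + 2))) :
    Subsingleton (Ext (ModuleCat.of R (R ⧸ I)) M (n + 1)) := by
  obtain ⟨φ, π, _, _, hπφ⟩ := exists_mono_epi_quotient_quotSMulTop ha
  have hcoker : Module.Finite R ↑(cokernel φ) := Module.Finite.of_surjective (cokernel.π φ).hom
    ((ModuleCat.epi_iff_surjective _).1 inferInstance)
  have := hsucc (cokernel φ) hcoker
  rcases n with - | n
  · exact subsingleton_ext_one_of_comp_eq_smul_id (R := R) hπφ (smul_id_quotSMulTop x)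
      hxM.smulShortComplex_shortExact.mono_f hU
  · exact subsingleton_ext_of_mono_quotSMulTop hx φ (by lia)

variable [IsLocalRing R] [IsNoetherianRing R] {M : ModuleCat.{u} R} [Module.Finite R M]

lemma subsingleton_ext_of_isSMulRegular {N : ModuleCat.{u} R} [Module.Finite R N]
    {y : R} (hy : y ∈ maximalIdeal R) (hyN : IsSMulRegular N y) {n : ℕ}
    [Subsingleton (Ext (ModuleCat.of R (QuotSMulTop y N)) M (n + 1))] :
    Subsingleton (Ext N M n) := by
  by_contra hne
  have := not_subsingleton_iff_nontrivial.1 hne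
  have hjac : y ∈ (Module.annihilator R (Ext N M n)).jacobson := maximalIdeal_le_jacobson _ hy
  refine Submodule.top_ne_pointwise_smul_of_mem_jacobson_annihilator hjac
    (eq_top_iff.2 fun e _ ↦ ?_).symm
  obtain ⟨e', he'⟩ := Ext.contravariant_sequence_exact₁ hyN.smulShortComplex_shortExact M e
    (add_comm 1 n) (Subsingleton.elim (α := Ext (ModuleCat.of R (QuotSMulTop y N)) M (n + 1)) _ _)
  rw [← (smul_ext_eq_mk₀_comp y e').trans he']
  exact Submodule.smul_mem_pointwise_smul _ _ ⊤ Submodule.mem_top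

lemma forall_subsingleton_ext_of_residueField {n : ℕ}
    (hsucc : ∀ N : ModuleCat.{u} R, Module.Finite R N → Subsingleton (Ext N M (n + 1)))
    (hk : Subsingleton (Ext (ModuleCat.of R (R ⧸ maximalIdeal R)) M n))
    (N : ModuleCat.{u} R) (hN : Module.Finite R N) : Subsingleton (Ext N M n) := by
  have hprime (q : PrimeSpectrum R) :
      Subsingleton (Ext (ModuleCat.of R (R ⧸ q.asIdeal)) M n) := by
    rcases (le_maximalIdeal q.2.ne_top).eq_or_lt with hq | hq
    · rwa [hq]
    · obtain ⟨y, hym, hyq⟩ := SetLike.exists_of_lt hq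
      have := hsucc (ModuleCat.of R (QuotSMulTop y (R ⧸ q.asIdeal))) inferInstance
      refine subsingleton_ext_of_isSMulRegular (N := ModuleCat.of R (R ⧸ q.asIdeal)) hym ?_
      exact (isSMulRegular_quotient_iff_mem_of_smul_mem _ y).2 fun r hr ↦
        (q.2.mem_or_mem hr).resolve_left hyq
  refine IsNoetherianRing.induction_on_isQuotientEquivQuotientPrime R hN
    (motive := fun N _ _ _ ↦ Subsingleton (Ext (ModuleCat.of R N) M n)) ?_ ?_ ?_
  · intro N _ _ _ _
    have := (ModuleCat.isZero_of_subsingleton (ModuleCat.of R N)).hasProjectiveDimensionLT_zero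
    exact HasProjectiveDimensionLT.subsingleton (ModuleCat.of R N) 0 n n.zero_le M
  · intro N _ _ _ q i
    have := hprime q
    exact subsingleton_ext_of_iso i.symm.toModuleIso
  · intro N₁ _ _ _ N₂ _ _ _ N₃ _ _ _ f g hf hg hfg h₁ h₃
    have hS := ModuleCat.shortComplex_shortExact
      (ModuleCat.shortComplexOfCompEqZero f g hfg.linearMap_comp_eq_zero) hfg hf hg
    refine subsingleton_of_forall_eq 0 fun e ↦ ?_
    obtain ⟨e₃, rfl⟩ := Ext.contravariant_sequence_exact₂ hS M e (h₁.elim _ _)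
    rw [h₃.elim e₃ 0, Ext.comp_zero]

variable {x a : R} {U : M ⟶ M}

lemma subsingleton_ext_succ_of_hasInjectiveDimensionLE (hx : IsSMulRegular R x)
    (hxM : IsSMulRegular M x) (ha : ∀ r, r ∈ maximalIdeal R ↔ x ∣ a * r)
    (hU : a • 𝟙 M = x • U) (d : ℕ) [HasInjectiveDimensionLE M d] (n : ℕ)
    (N : ModuleCat.{u} R) (hN : Module.Finite R N) : Subsingleton (Ext N M (n + 1)) := by
  obtain ⟨k, hk⟩ : ∃ k, d ≤ n + k := ⟨d, d.le_add_left n⟩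
  induction k generalizing n N with
  | zero => exact HasInjectiveDimensionLT.subsingleton M (d + 1) (n + 1) (by lia) N
  | succ k ih =>
    have hsucc (N : ModuleCat.{u} R) (hN : Module.Finite R N) : Subsingleton (Ext N M (n + 2)) :=
      ih (n + 1) N hN (by lia)
    exact forall_subsingleton_ext_of_residueField hsucc
      (subsingleton_ext_quotient hx hxM ha hU hsucc) N hN

theorem subsingleton_of_hasInjectiveDimensionLE (hx : IsSMulRegular R x)
    (hxM : IsSMulRegular M x) (ha : ∀ r, r ∈ maximalIdeal R ↔ x ∣ a * r)
    (hU : a • 𝟙 M = x • U) (d : ℕ) [HasInjectiveDimensionLE M d] : Subsingleton M := by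
  have hxm : x ∈ maximalIdeal R := (ha x).2 (dvd_mul_left x a)
  have := subsingleton_ext_succ_of_hasInjectiveDimensionLE hx hxM ha hU d 0
    (ModuleCat.of R (QuotSMulTop x R)) inferInstance
  have : Subsingleton (Ext (ModuleCat.of R R) M 0) := subsingleton_ext_of_isSMulRegular hxm hx
  refine subsingleton_of_forall_eq 0 fun m ↦ ?_
  have hm : ModuleCat.ofHom (LinearMap.toSpanSingleton R M m) = 0 :=
    Ext.addEquiv₀.symm.injective (Subsingleton.elim _ _)
  simpa using LinearMap.congr_fun (congrArg ModuleCat.Hom.hom hm) (1 : R)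

end InjectiveDimension

section Localization

universe u

variable {R : Type u} [CommRing R]

lemma mem_maximalIdeal_localization_iff_dvd {p : Ideal R} [p.IsPrime] {x a : R}
    (ha : ∀ r, r ∈ p ↔ x ∣ a * r) (z : Localization.AtPrime p) :
    z ∈ maximalIdeal (Localization.AtPrime p) ↔ algebraMap R _ x ∣ algebraMap R _ a * z := by
  obtain ⟨r, s, rfl⟩ := IsLocalization.exists_mk'_eq p.primeCompl z
  rw [IsLocalization.AtPrime.mk'_mem_maximal_iff (Localization.AtPrime p) p,
    IsLocalization.mul_mk'_eq_mk'_of_mul, ← Ideal.mem_span_singleton, ← Set.image_singleton,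
    ← Ideal.map_span, IsLocalization.mk'_mem_map_algebraMap_iff p.primeCompl]
  simp only [Ideal.mem_span_singleton, mul_left_comm _ a r, ← ha]
  exact ⟨fun hr ↦ ⟨1, one_mem _, by rwa [one_mul]⟩,
    fun ⟨t, ht, htr⟩ ↦ (Ideal.IsPrime.mem_or_mem ‹_› htr).resolve_left ht⟩

lemma smul_id_localizedModule_eq {M : ModuleCat.{u} R} {x a : R} {U : M ⟶ M}
    (hU : a • 𝟙 M = x • U) (S : Submonoid R) :
    algebraMap R (Localization S) a • 𝟙 (M.localizedModule S) =
      algebraMap R (Localization S) x • ModuleCat.localizedModuleMap S U := by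
  ext z
  obtain ⟨⟨m, s⟩, rfl⟩ := IsLocalizedModule.mk'_surjective S (M.localizedModuleMkLinearMap S) z
  have hm : a • m = x • U.hom m := LinearMap.congr_fun (congrArg ModuleCat.Hom.hom hU) m
  simp [IsLocalizedModule.map_mk', ← IsLocalizedModule.mk'_smul, hm]

theorem exists_notMem_smul_eq_zero_of_hasInjectiveDimensionLE [IsNoetherianRing R]
    {M : ModuleCat.{u} R} [Module.Finite R M] {p : Ideal R} [p.IsPrime] {x a : R} {U : M ⟶ M}
    (hx : IsSMulRegular R x) (hxM : IsSMulRegular M x) (ha : ∀ r, r ∈ p ↔ x ∣ a * r)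
    (hU : a • 𝟙 M = x • U) (d : ℕ) [HasInjectiveDimensionLE M d] (m : M) :
    ∃ t ∉ p, t • m = 0 := by
  have := M.localizedModule_hasInjectiveDimensionLE d p.primeCompl
  have : Module.Finite (Localization.AtPrime p) (M.localizedModule p.primeCompl) :=
    Module.Finite.of_isLocalizedModule p.primeCompl (M.localizedModuleMkLinearMap p.primeCompl)
  have : Subsingleton (M.localizedModule p.primeCompl) :=
    subsingleton_of_hasInjectiveDimensionLE (R := Localization.AtPrime p)
      (hx.of_isLocalization (Localization.AtPrime p) p.primeCompl)
      (hxM.of_isLocalizedModule (Localization.AtPrime p) p.primeCompl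
        (M.localizedModuleMkLinearMap p.primeCompl))
      (mem_maximalIdeal_localization_iff_dvd ha) (smul_id_localizedModule_eq hU p.primeCompl) d
  obtain ⟨t, ht⟩ := (IsLocalizedModule.eq_zero_iff p.primeCompl
    (M.localizedModuleMkLinearMap p.primeCompl) (m := m)).1 (Subsingleton.elim _ 0)
  exact ⟨t, t.2, ht⟩

end Localization

section FiniteInjectiveDimension

open Abelian

lemma subsingleton_abelianExt_of_subsingleton_ext {R : Type*} [CommRing R] {C : Type*} [Category C]
    [Abelian C] [Linear R C] [EnoughProjectives C] [HasExt C] {N M : C} {n : ℕ}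
    (h : Subsingleton (((_root_.Ext R C (n + 1)).obj (Opposite.op N)).obj M)) :
    Subsingleton (Ext N M (n + 1)) := by
  let P := projectiveResolution N
  have hexact := (ModuleCat.isZero_of_subsingleton
    (((_root_.Ext R C (n + 1)).obj (Opposite.op N)).obj M)).of_iso (P.isoExt (n + 1) M).symm
  rw [← HomologicalComplex.exactAt_iff_isZero_homology,
    HomologicalComplex.exactAt_iff' _ n (n + 1) (n + 2) (by simp) (by simp),
    ShortComplex.moduleCat_exact_iff] at hexact
  refine subsingleton_of_forall_eq 0 fun e ↦ ?_
  obtain ⟨f, hf, rfl⟩ := P.extMk_surjective e (n + 2) rfl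
  rw [P.extMk_eq_zero_iff f (n + 2) rfl hf n rfl]
  exact hexact f hf

variable {R : Type} [CommRing R] {M : Type} [AddCommGroup M] [Module R M]

lemma exists_hasInjectiveDimensionLE_of_hasFiniteInjDim (h : HasFiniteInjDim R M) :
    ∃ d, HasInjectiveDimensionLE (ModuleCat.of R M) d := by
  obtain ⟨d, hd⟩ := h
  refine ⟨d, (hasInjectiveDimensionLT_iff _ _).2 fun i hi N e ↦ ?_⟩
  obtain ⟨j, rfl⟩ : ∃ j, i = j + 1 := ⟨i - 1, by lia⟩
  have := subsingleton_abelianExt_of_subsingleton_ext (hd N (j + 1) hi)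
  exact Subsingleton.elim e 0

lemma hasFiniteInjDim_of_linearEquiv {N : Type} [AddCommGroup N] [Module R N] (e : M ≃ₗ[R] N)
    (h : HasFiniteInjDim R M) : HasFiniteInjDim R N := by
  obtain ⟨d, hd⟩ := h
  refine ⟨d, fun L i hi ↦ ?_⟩
  have := hd L i hi
  exact (((_root_.Ext R (ModuleCat.{0} R) i).obj (Opposite.op L)).mapIso
    e.toModuleIso).toLinearEquiv.symm.toEquiv.subsingleton

end FiniteInjectiveDimension

section Conductor

variable {R : Type} [CommRing R]

lemma mem_range_linearMap_intClosure_iff {v : IntClosure R} :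
    v ∈ LinearMap.range (Algebra.linearMap R (IntClosure R)) ↔
      ∃ s : R, algebraMap R (FractionRing R) s = v :=
  exists_congr fun _ ↦ Subtype.ext_iff

lemma mem_conductorIdeal_iff {r : R} : r ∈ conductorIdeal R ↔
    ∀ u : FractionRing R, IsIntegral R u → ∃ s : R, algebraMap R (FractionRing R) s = r • u := by
  rw [conductorIdeal, Submodule.annihilator_quotient, Submodule.mem_colon]
  simp only [Set.mem_univ, true_imp_iff, mem_range_linearMap_intClosure_iff]
  exact ⟨fun h u hu ↦ h ⟨u, hu⟩, fun h v ↦ h v v.2⟩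

lemma conductorIdeal_eq_top (h : integralClosure R (FractionRing R) = ⊥) :
    conductorIdeal R = ⊤ := by
  refine (Ideal.eq_top_iff_one _).2 (mem_conductorIdeal_iff.2 fun u hu ↦ ?_)
  rw [one_smul]
  exact Algebra.mem_bot.1 (h ▸ hu : u ∈ (⊥ : Subalgebra R (FractionRing R)))

lemma exists_mem_conductorIdeal_mem_nonZeroDivisors [Module.Finite R (IntClosure R)] :
    ∃ x ∈ conductorIdeal R, x ∈ nonZeroDivisors R := by
  obtain ⟨S, hS⟩ := Module.Finite.fg_top (R := R) (M := IntClosure R)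
  obtain ⟨b, hb⟩ := IsLocalization.exist_integer_multiples (nonZeroDivisors R) S
    (fun v ↦ (v : FractionRing R))
  have hle : (⊤ : Submodule R (IntClosure R)) ≤
      (LinearMap.range (Algebra.linearMap R (IntClosure R))).comap
        (LinearMap.lsmul R (IntClosure R) (b : R)) := by
    rw [← hS, Submodule.span_le]
    exact fun v hv ↦ mem_range_linearMap_intClosure_iff.2 (hb v hv)
  exact ⟨b, mem_conductorIdeal_iff.2 fun u hu ↦
    mem_range_linearMap_intClosure_iff.1 (hle (Submodule.mem_top (x := (⟨u, hu⟩ : IntClosure R)))),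
    b.2⟩

lemma exists_mem_conductorIdeal_algebraMap_eq_smul {u : FractionRing R} (hu : IsIntegral R u)
    {m : R} (hm : m ∈ conductorIdeal R) :
    ∃ n ∈ conductorIdeal R, algebraMap R (FractionRing R) n = m • u := by
  obtain ⟨n, hn⟩ := mem_conductorIdeal_iff.1 hm u hu
  refine ⟨n, mem_conductorIdeal_iff.2 fun w hw ↦ ?_, hn⟩
  obtain ⟨s, hs⟩ := mem_conductorIdeal_iff.1 hm (u * w) (hu.mul hw)
  exact ⟨s, by rw [hs, Algebra.smul_def n, hn, smul_mul_assoc]⟩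

lemma exists_linearMap_conductorIdeal_algebraMap_eq_smul {u : FractionRing R}
    (hu : IsIntegral R u) : ∃ U : conductorIdeal R →ₗ[R] conductorIdeal R,
      ∀ m, algebraMap R (FractionRing R) (U m) = (m : R) • u := by
  have hinj : Function.Injective fun n : conductorIdeal R ↦ algebraMap R (FractionRing R) n :=
    (IsFractionRing.injective R (FractionRing R)).comp Subtype.val_injective
  choose U hUmem hU using fun m : conductorIdeal R ↦
    exists_mem_conductorIdeal_algebraMap_eq_smul hu m.2
  refine ⟨IsLinearMap.mk' (fun m ↦ ⟨U m, hUmem m⟩) ⟨fun m n ↦ hinj ?_, fun r m ↦ hinj ?_⟩, hU⟩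
  · simp only [Submodule.coe_add, map_add, hU, add_smul]
  · simp only [Submodule.coe_smul, smul_eq_mul, map_mul, hU, Algebra.smul_def, mul_assoc]

lemma exists_isPrime_forall_mem_iff_of_integralClosure_ne_bot [IsNoetherianRing R]
    (h : integralClosure R (FractionRing R) ≠ ⊥) :
    ∃ (p : Ideal R) (u : FractionRing R), p.IsPrime ∧ IsIntegral R u ∧
      ∀ r, r ∈ p ↔ ∃ s : R, algebraMap R (FractionRing R) s = r • u := by
  have : Nontrivial (IntClosureQuot R) := by
    rw [Submodule.Quotient.nontrivial_iff]
    refine fun htop ↦ h (eq_bot_iff.2 fun u hu ↦ Algebra.mem_bot.2 ?_)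
    exact (mem_range_linearMap_intClosure_iff (v := ⟨u, hu⟩)).1 (htop ▸ Submodule.mem_top)
  obtain ⟨p, hp⟩ := associatedPrimes.nonempty R (IntClosureQuot R)
  obtain ⟨hprime, v, hv⟩ := isAssociatedPrime_iff.1 hp
  obtain ⟨⟨u, hu⟩, rfl⟩ := Submodule.mkQ_surjective _ v
  refine ⟨p, u, hprime, hu, fun r ↦ ?_⟩
  rw [hv, Submodule.mem_colon_singleton, Submodule.mem_bot, ← map_smul, Submodule.mkQ_apply,
    Submodule.Quotient.mk_eq_zero, mem_range_linearMap_intClosure_iff]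
  rfl

lemma dvd_mul_iff_exists_algebraMap_eq_smul {K : Type*} [CommRing K] [Algebra R K]
    [IsFractionRing R K] {x a : R} {u : K} (hx : x ∈ nonZeroDivisors R)
    (ha : algebraMap R K a = x • u) (r : R) : x ∣ a * r ↔ ∃ s : R, algebraMap R K s = r • u := by
  have hxK : IsUnit (algebraMap R K x) := IsLocalization.map_units K ⟨x, hx⟩
  refine exists_congr fun s ↦ ?_
  rw [← (IsFractionRing.injective R K).eq_iff, map_mul, map_mul, ha, Algebra.smul_def,
    Algebra.smul_def, mul_assoc, hxK.mul_right_inj, eq_comm, mul_comm u]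

theorem integralClosure_eq_bot_of_hasFiniteInjDim_conductorIdeal [IsNoetherianRing R]
    [Module.Finite R (IntClosure R)] (hid : HasFiniteInjDim R (conductorIdeal R)) :
    integralClosure R (FractionRing R) = ⊥ := by
  by_contra hne
  obtain ⟨x, hxc, hx⟩ := exists_mem_conductorIdeal_mem_nonZeroDivisors (R := R)
  obtain ⟨p, u, _, hu, hp⟩ := exists_isPrime_forall_mem_iff_of_integralClosure_ne_bot hne
  obtain ⟨a, ha⟩ := mem_conductorIdeal_iff.1 hxc u hu
  obtain ⟨U, hU⟩ := exists_linearMap_conductorIdeal_algebraMap_eq_smul hu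
  obtain ⟨d, _⟩ := exists_hasInjectiveDimensionLE_of_hasFiniteInjDim hid
  have hxR : IsSMulRegular R x := (isRegular_iff_mem_nonZeroDivisors.2 hx).left.isSMulRegular
  have haU : a • LinearMap.id = x • U := by
    ext m
    refine IsFractionRing.injective R (FractionRing R) ?_
    change algebraMap R (FractionRing R) (a * (m : R)) = algebraMap R _ (x * (U m : R))
    rw [map_mul, map_mul, hU, ha, Algebra.smul_def, Algebra.smul_def]
    ring
  obtain ⟨t, htp, ht⟩ := exists_notMem_smul_eq_zero_of_hasInjectiveDimensionLE
    (M := ModuleCat.of R (conductorIdeal R)) (U := ModuleCat.ofHom U) hxR (hxR.submodule _ x)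
    (fun r ↦ (hp r).trans (dvd_mul_iff_exists_algebraMap_eq_smul hx ha r).symm)
    (ModuleCat.hom_ext haU) d (⟨x, hxc⟩ : conductorIdeal R)
  have htx : t * x = 0 := congrArg Subtype.val ht
  rw [mul_right_mem_nonZeroDivisors_eq_zero_iff hx] at htx
  exact htp (htx ▸ p.zero_mem)

end Conductor

section AnalyticallyUnramified

variable {R : Type} [CommRing R] [IsLocalRing R] [IsNoetherianRing R]

lemma isReduced_of_analyticallyUnramified (hau : AnalyticallyUnramified R) : IsReduced R :=
  have : IsReduced (AdicCompletion (maximalIdeal R) R) := hau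
  isReduced_of_injective (algebraMap R (AdicCompletion (maximalIdeal R) R))
    (AdicCompletion.of_injective (maximalIdeal R) R)

theorem finite_intClosure_of_analyticallyUnramified (hau : AnalyticallyUnramified R) :
    Module.Finite R (IntClosure R) := by
  have : IsReduced (AdicCompletion (maximalIdeal R) R) := hau
  have : IsNoetherianRing (AdicCompletion (maximalIdeal R) R) := isNoetherianRing_adicCompletion _
  have : Module.Flat R (AdicCompletion (maximalIdeal R) R) :=
    AdicCompletion.flat_of_isNoetherian _
  have : Module.FaithfullyFlat R (AdicCompletion (maximalIdeal R) R) :=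
    Module.FaithfullyFlat.of_flat_of_isLocalHom
  refine finite_integralClosure_of_faithfullyFlat (C := AdicCompletion (maximalIdeal R) R)
    (fun p hp ↦ ?_) _
  have : p.IsPrime := hp.1.1
  exact finite_integralClosure_of_isAdicComplete _ _

end AnalyticallyUnramified

-- STATEMENT 1
theorem stmt1 (R : Type) [CommRing R] [IsLocalRing R] [IsNoetherianRing R]
    (hau : AnalyticallyUnramified R)
    (hid : HasFiniteInjDim R ↥(conductorIdeal R)) :
    IsNormalRing R ∧ IsGorensteinLocal R := by
  have := finite_intClosure_of_analyticallyUnramified hau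
  have hbot := integralClosure_eq_bot_of_hasFiniteInjDim_conductorIdeal hid
  have e : conductorIdeal R ≃ₗ[R] R :=
    (LinearEquiv.ofEq _ _ (conductorIdeal_eq_top hbot)).trans Submodule.topEquiv
  exact ⟨⟨isReduced_of_analyticallyUnramified hau, hbot⟩,
    inferInstance, hasFiniteInjDim_of_linearEquiv e hid⟩
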